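/- arXiv:0910.4857 — 2 statements merged into one kernel-verified Lean document; each statement's English description precedes it below -/
import Mathlib

section
/- Let ⟨A|R⟩ be an equivalence presentation satisfying the condition C(4). Then the monoid presented is right cancellative if and only if R contains no relation of the form (ra, sa) where a ∈ A and r, s are words over A with r ≠ s. -/
open FreeMonoid

/-- The congruence on the free monoid generated by a presentation `R`. -/
def presCon {A : Type*} (R : Set (FreeMonoid A × FreeMonoid A)) : Con (FreeMonoid A) :=
  conGen fun u v => (u, v) ∈ R

/-- `w` is a relation word of the presentation `R`. -/
def IsRelWord {A : Type*} (R : Set (FreeMonoid A × FreeMonoid A)) (w : FreeMonoid A) : Prop :=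
  ∃ p ∈ R, p.1 = w ∨ p.2 = w

/-- `u` is a factor of `w`. -/
def IsFactor {A : Type*} (u w : FreeMonoid A) : Prop := ∃ p q, w = p * u * q

/-- `u` is a piece of the presentation `R`: it is empty, or occurs as a factor of two
distinct relation words, or in two different (possibly overlapping) positions within
one relation word. -/
def IsPiece {A : Type*} (R : Set (FreeMonoid A × FreeMonoid A)) (u : FreeMonoid A) : Prop :=
  u = 1 ∨
  (∃ w₁ w₂, IsRelWord R w₁ ∧ IsRelWord R w₂ ∧ w₁ ≠ w₂ ∧ IsFactor u w₁ ∧ IsFactor u w₂) ∨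
  (∃ w, IsRelWord R w ∧ ∃ p q p' q', w = p * u * q ∧ w = p' * u * q' ∧ p ≠ p')

/-- The small overlap condition `C(m)`: no relation word is a product of strictly fewer
than `m` pieces. -/
def SmallOverlapC {A : Type*} (R : Set (FreeMonoid A × FreeMonoid A)) (m : ℕ) : Prop :=
  ∀ w, IsRelWord R w → ∀ l : List (FreeMonoid A),
    (∀ x ∈ l, IsPiece R x) → l.prod = w → m ≤ l.length

/-- `⟨A|R⟩` is an equivalence presentation: `R` is an equivalence relation on the set
of relation words. -/
def IsEquivPres {A : Type*} (R : Set (FreeMonoid A × FreeMonoid A)) : Prop :=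
  (∀ w, IsRelWord R w → (w, w) ∈ R) ∧
  (∀ u v, (u, v) ∈ R → (v, u) ∈ R) ∧
  (∀ u v w, (u, v) ∈ R → (v, w) ∈ R → (u, w) ∈ R)

/-!
Suppose no relation has the form `(ra, sa)` with `r ≠ s`, and let `ua ≡ va`. Follow the
rewriting of `ua`. Until a relation touches the last letter, only the prefix `u` changes. Once
one does, the current word has the shape `pW` for some relation word `W` equivalent to a
relation word `Sa` with `u ≡ pS`. Later relations can only overlap `W` in a piece on its left,
so the right end of `W` stays visible until a relation is applied to `W` itself, as `C(3)` keeps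
any other relation word from reaching the right end. At the end the visible suffix `W` ends in
`a`, so `W = Sa` and `u ≡ pS ≡ v`.

Conversely, if `(ra, sa)` is a relation, then `r` is a proper factor of a relation word, so it
has no relation word as a factor and is alone in its congruence class.
-/

section Words

variable {A : Type*}

theorem freeMonoid_mul_eq_mul_iff {a b c d : FreeMonoid A} :
    a * b = c * d ↔ (∃ e, c = a * e ∧ b = e * d) ∨ ∃ e, a = c * e ∧ d = e * b :=
  List.append_eq_append_iff

theorem freeMonoid_eq_one_or_exists_eq_mul_of (w : FreeMonoid A) :
    w = 1 ∨ ∃ (v : FreeMonoid A) (a : A), w = v * of a := by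
  rcases List.eq_nil_or_concat w.toList with h | ⟨v, a, h⟩
  · exact .inl h
  · exact .inr ⟨ofList v, a, h.trans List.concat_eq_append⟩

theorem freeMonoid_mul_of_eq_mul_of_iff {v w : FreeMonoid A} {a b : A} :
    v * of a = w * of b ↔ v = w ∧ a = b :=
  List.append_singleton_inj

end Words

section Presentation

variable {A : Type*} {R : Set (FreeMonoid A × FreeMonoid A)}
  {p q p' q' r s u v w x y : FreeMonoid A}

section Pieces

theorem isRelWord_left (h : (u, v) ∈ R) : IsRelWord R u := ⟨_, h, .inl rfl⟩

theorem isRelWord_right (h : (u, v) ∈ R) : IsRelWord R v := ⟨_, h, .inr rfl⟩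

theorem IsEquivPres.symm (heq : IsEquivPres R) (huv : (u, v) ∈ R) : (v, u) ∈ R :=
  heq.2.1 u v huv

theorem IsEquivPres.trans (heq : IsEquivPres R) (huv : (u, v) ∈ R) (hvw : (v, w) ∈ R) :
    (u, w) ∈ R :=
  heq.2.2 u v w huv hvw

theorem IsFactor.trans (huv : IsFactor u v) (hvw : IsFactor v w) : IsFactor u w := by
  obtain ⟨p, q, rfl⟩ := huv
  obtain ⟨p', q', rfl⟩ := hvw
  exact ⟨p' * p, q * q', by simp only [mul_assoc]⟩

theorem IsPiece.of_isFactor (hv : IsPiece R v) (huv : IsFactor u v) : IsPiece R u := by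
  rcases hv with rfl | ⟨w, w', hw, hw', hne, hvw, hvw'⟩ | ⟨w, hw, p, q, p', q', hpq, hpq', hne⟩
  · obtain ⟨p, q, h⟩ := huv
    exact .inl (mul_eq_one'.1 (mul_eq_one'.1 h.symm).1).2
  · exact .inr (.inl ⟨w, w', hw, hw', hne, huv.trans hvw, huv.trans hvw'⟩)
  · obtain ⟨c, d, rfl⟩ := huv
    refine .inr (.inr ⟨w, hw, p * c, d * q, p' * c, d * q', ?_, ?_, ?_⟩)
    · simpa only [mul_assoc] using hpq
    · simpa only [mul_assoc] using hpq'
    · exact fun h => hne (mul_right_cancel h)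

theorem eq_and_eq_of_not_isPiece (hu : ¬ IsPiece R u) (hw : IsRelWord R (p * u * q))
    (hw' : IsRelWord R (p' * u * q')) : p = p' ∧ q = q' := by
  have hww' : p * u * q = p' * u * q' := by
    by_contra hne
    exact hu (.inr (.inl ⟨_, _, hw, hw', hne, ⟨p, q, rfl⟩, ⟨p', q', rfl⟩⟩))
  have hp : p = p' := by
    by_contra hne
    exact hu (.inr (.inr ⟨_, hw, p, q, p', q', rfl, hww', hne⟩))
  subst hp
  exact ⟨rfl, mul_left_cancel hww'⟩

theorem isPiece_of_suffix_of_ne_one (hu : IsRelWord R (p * u)) (hw : IsRelWord R (p' * u * q))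
    (hq : q ≠ 1) : IsPiece R u := by
  by_contra h
  exact hq (eq_and_eq_of_not_isPiece h hw (q' := 1) (by simpa using hu)).2

theorem SmallOverlapC.mono {m n : ℕ} (hmn : m ≤ n) (hC : SmallOverlapC R n) : SmallOverlapC R m :=
  fun w hw l hl hlw => hmn.trans (hC w hw l hl hlw)

theorem IsPiece.not_isRelWord (hC : SmallOverlapC R 2) (hu : IsPiece R u) : ¬ IsRelWord R u := by
  intro h
  have := hC u h [u] (by simpa using hu) (by simp)
  simp at this

theorem IsPiece.not_isRelWord_mul (hC : SmallOverlapC R 3) (hu : IsPiece R u) (hv : IsPiece R v) :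
    ¬ IsRelWord R (u * v) := by
  intro h
  have := hC _ h [u, v] (by simpa using ⟨hu, hv⟩) (by simp)
  simp at this

theorem IsRelWord.ne_one (hC : SmallOverlapC R 2) (hw : IsRelWord R w) : w ≠ 1 := by
  rintro rfl
  exact IsPiece.not_isRelWord hC (.inl rfl) hw

theorem IsRelWord.eq_one_and_eq_one (hC : SmallOverlapC R 2) (hu : IsRelWord R u)
    (hw : IsRelWord R (p * u * q)) : p = 1 ∧ q = 1 :=
  eq_and_eq_of_not_isPiece (fun h => h.not_isRelWord hC hu) hw (p' := 1) (q' := 1)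
    (by simpa using hu)

end Pieces

section Congruence

theorem presCon_of_mem (h : (u, v) ∈ R) : presCon R u v := ConGen.Rel.of _ _ h

theorem presCon_mul_left (w : FreeMonoid A) (h : presCon R u v) : presCon R (w * u) (w * v) :=
  (presCon R).mul ((presCon R).refl w) h

theorem presCon_mul_right (w : FreeMonoid A) (h : presCon R u v) : presCon R (u * w) (v * w) :=
  (presCon R).mul h ((presCon R).refl w)

/-- The syntactic congruence of a set of elements of a monoid, given as a predicate: two elements
are related if no two-sided context tells them apart. -/
def syntacticCon {M : Type*} [Monoid M] (P : M → Prop) : Con M where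
  r x y := ∀ p q, P (p * x * q) ↔ P (p * y * q)
  iseqv :=
    { refl := fun _ _ _ => Iff.rfl
      symm := fun h p q => (h p q).symm
      trans := fun h h' p q => (h p q).trans (h' p q) }
  mul' {w x y z} hwx hyz p q := by
    have h₁ := hwx p (y * q)
    have h₂ := hyz (p * x) q
    simp only [mul_assoc] at h₁ h₂ ⊢
    exact h₁.trans h₂

@[elab_as_elim]
theorem presCon_induction (heq : IsEquivPres R) {motive : FreeMonoid A → Prop}
    (hxy : presCon R x y) (hx : motive x)
    (rewrite : ∀ p s s' q, (s, s') ∈ R → motive (p * s * q) → motive (p * s' * q)) :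
    motive y := by
  have hle : presCon R ≤ syntacticCon motive := Con.conGen_le.2 fun s s' hs p q =>
    ⟨rewrite p s s' q hs, rewrite p s' s q (heq.symm hs)⟩
  simpa using (hle hxy 1 1).1 (by simpa using hx)

theorem eq_of_presCon_of_isRelWord_mul (heq : IsEquivPres R) (hC : SmallOverlapC R 2)
    (hrv : IsRelWord R (r * v)) (hv : v ≠ 1) (hrs : presCon R r s) : r = s := by
  refine presCon_induction heq hrs rfl fun p t t' q ht hr => ?_
  subst hr
  have hqv : q * v = 1 :=
    ((isRelWord_left ht).eq_one_and_eq_one hC (p := p) (by simpa only [mul_assoc] using hrv)).2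
  exact absurd (mul_eq_one'.1 hqv).2 hv

end Congruence

section LooseSuffix

/-- `HasLooseSuffix R p W x` says that `x ≡ p * W` through a derivation that keeps a right end of
the relation word `W` in place: either `x` ends in `W`, or `W = Z * Q` with `Z` a piece,
`x = t * Q`, and `t` has, in turn, as loose suffix a relation word equivalent to one ending in
`Z`. -/
inductive HasLooseSuffix (R : Set (FreeMonoid A × FreeMonoid A)) :
    FreeMonoid A → FreeMonoid A → FreeMonoid A → Prop
  | suffix {p p' W : FreeMonoid A} (hp : presCon R p p') : HasLooseSuffix R p W (p' * W)
  | overlap {p p' q Z Q U t : FreeMonoid A} (hZ : IsPiece R Z) (hU : (q * Z, U) ∈ R)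
      (hp : presCon R p (p' * q)) (ht : HasLooseSuffix R p' U t) :
      HasLooseSuffix R p (Z * Q) (t * Q)

/-- A presentation is right reduced if distinct words related by `R` never end in the same
letter. -/
def RightReduced (R : Set (FreeMonoid A × FreeMonoid A)) : Prop :=
  ∀ (a : A) (r s : FreeMonoid A), (r * of a, s * of a) ∈ R → r = s

theorem RightReduced.eq_of_mul_mem (hR : RightReduced R) (hv : v ≠ 1)
    (h : (r * v, s * v) ∈ R) : r = s := by
  obtain ⟨v, a, rfl⟩ := (freeMonoid_eq_one_or_exists_eq_mul_of v).resolve_left hv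
  exact mul_right_cancel (hR a (r * v) (s * v) (by simpa only [mul_assoc] using h))

namespace HasLooseSuffix

variable {S S' U W Z l t z m e : FreeMonoid A}

theorem presCon_mul (h : HasLooseSuffix R p W x) : presCon R (p * W) x := by
  induction h with
  | suffix hp => exact presCon_mul_right _ hp
  | @overlap p p' q Z Q U t _ hU hp _ ih =>
    have hpZ : presCon R (p * Z) (p' * (q * Z)) := by
      simpa only [mul_assoc] using presCon_mul_right Z hp
    have hpt : presCon R (p * Z) t :=
      (presCon R).trans hpZ ((presCon R).trans
        (presCon_mul_left p' (presCon_of_mem hU)) ih)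
    simpa only [mul_assoc] using presCon_mul_right Q hpt

theorem exists_split (h : HasLooseSuffix R p W x) :
    ∃ Z Q t, W = Z * Q ∧ x = t * Q ∧ IsPiece R Z ∧ presCon R (p * Z) t := by
  cases h with
  | @suffix p p' W hp => exact ⟨1, W, p', by simp, rfl, .inl rfl, by simpa using hp⟩
  | @overlap p p' q Z Q U t hZ hU hp ht =>
    refine ⟨Z, Q, t, rfl, rfl, hZ, ?_⟩
    simpa using (overlap (Q := 1) hZ hU hp ht).presCon_mul

theorem eq_one_and_eq_of_overlap (hC : SmallOverlapC R 3) (h : HasLooseSuffix R p U (r * e))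
    (hU : IsRelWord R U) (hS : IsRelWord R (e * m)) (hm : IsPiece R m) : m = 1 ∧ U = e := by
  obtain ⟨Z, Q, t, rfl, ht, hZ, -⟩ := h.exists_split
  rcases freeMonoid_mul_eq_mul_iff.1 ht with ⟨c, rfl, rfl⟩ | ⟨c, rfl, rfl⟩
  · have hQ : ¬ IsPiece R Q := fun hQ => hZ.not_isRelWord_mul hC hQ hU
    obtain ⟨rfl, rfl⟩ := eq_and_eq_of_not_isPiece hQ hS (p' := Z) (q' := 1) (by simpa using hU)
    exact ⟨rfl, rfl⟩
  · have he : ¬ IsPiece R e := fun he => he.not_isRelWord_mul hC hm hS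
    obtain ⟨h₁, rfl⟩ := eq_and_eq_of_not_isPiece he (p := 1) (p' := Z * c) (q' := 1)
      (by simpa using hS) (by simpa only [mul_assoc, mul_one] using hU)
    exact ⟨rfl, by rw [← mul_assoc, ← h₁, one_mul]⟩

theorem presCon_of_mul (hC : SmallOverlapC R 3) (hR : RightReduced R)
    (hW : IsRelWord R W) (h : HasLooseSuffix R p W (z * W)) : presCon R p z := by
  generalize hx : z * W = x at h
  cases h with
  | suffix hp => rwa [mul_right_cancel hx]
  | @overlap _ p' q Z Q U t hZ hU hp ht =>
    obtain rfl : z * Z = t := mul_right_cancel (b := Q) (by simpa only [mul_assoc] using hx)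
    rcases eq_or_ne Z 1 with rfl | hZ1
    · have hqU : presCon R (p' * q) (p' * U) :=
        presCon_mul_left p' (presCon_of_mem (by simpa using hU))
      exact (presCon R).trans hp ((presCon R).trans hqU (by simpa using ht.presCon_mul))
    · obtain ⟨Z', Q', t', rfl, htQ, hZ', hpt⟩ := ht.exists_split
      rcases freeMonoid_mul_eq_mul_iff.1 htQ with ⟨c, rfl, rfl⟩ | ⟨c, rfl, rfl⟩
      · have hQ' : IsPiece R Q' := hZ.of_isFactor ⟨c, 1, by simp⟩
        exact absurd (isRelWord_right hU) (hZ'.not_isRelWord_mul hC hQ')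
      · obtain rfl : q = Z' * c := hR.eq_of_mul_mem hZ1 (by simpa only [mul_assoc] using hU)
        have hpc : presCon R (p' * (Z' * c)) (t' * c) := by
          simpa only [mul_assoc] using presCon_mul_right c hpt
        exact (presCon R).trans hp hpc

theorem rewrite_suffix (hC : SmallOverlapC R 2) (hS : (S, S') ∈ R) (hW : IsRelWord R W)
    (hl : l ≠ 1) (hp : presCon R p p') (hx : r * S * l = p' * W) :
    HasLooseSuffix R p W (r * S' * l) := by
  rcases freeMonoid_mul_eq_mul_iff.1 hx with ⟨e, rfl, rfl⟩ | ⟨m, hm, rfl⟩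
  · have hpr : presCon R p (r * S' * e) :=
      (presCon R).trans hp (presCon_mul_right e (presCon_mul_left r (presCon_of_mem hS)))
    simpa only [mul_assoc] using suffix hpr
  · rcases freeMonoid_mul_eq_mul_iff.1 hm with ⟨e, rfl, rfl⟩ | ⟨e, rfl, rfl⟩
    · have hm : IsPiece R m :=
        isPiece_of_suffix_of_ne_one (isRelWord_left hS) (p' := 1) (by simpa using hW) hl
      exact overlap hm hS hp (suffix ((presCon R).refl r))
    · exact absurd ((isRelWord_left hS).eq_one_and_eq_one hC hW).2 hl

theorem rewrite (heq : IsEquivPres R) (hC : SmallOverlapC R 3) (hR : RightReduced R)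
    (hS : (S, S') ∈ R) (h : HasLooseSuffix R p W (r * S * l)) (hW : IsRelWord R W) (hl : l ≠ 1) :
    HasLooseSuffix R p W (r * S' * l) := by
  have hC2 : SmallOverlapC R 2 := hC.mono (by norm_num)
  have hSw : IsRelWord R S := isRelWord_left hS
  generalize hx : r * S * l = x at h
  induction h generalizing l with
  | suffix hp => exact rewrite_suffix hC2 hS hW hl hp hx
  | @overlap p p' q Z Q U t hZ hU hp ht ih =>
    have hUw : IsRelWord R U := isRelWord_right hU
    have replace_end {e m} (he : S = e * m) (hte : t = r * e) (hQ : Q = m * l) :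
        HasLooseSuffix R p (Z * Q) (r * S' * l) := by
      subst he hte hQ
      have hm : IsPiece R m :=
        isPiece_of_suffix_of_ne_one hSw (by simpa only [mul_assoc] using hW) hl
      obtain ⟨rfl, rfl⟩ := ht.eq_one_and_eq_of_overlap hC hUw hSw hm
      rw [mul_one] at hS
      have hpr : presCon R p (r * q) :=
        (presCon R).trans hp (presCon_mul_right q (ht.presCon_of_mul hC hR hUw))
      simpa using overlap (Q := l) hZ (heq.trans hU hS) hpr (suffix ((presCon R).refl r))
    rcases freeMonoid_mul_eq_mul_iff.1 hx with ⟨c, hc, rfl⟩ | ⟨m, hm, rfl⟩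
    · rcases eq_or_ne c 1 with rfl | hc1
      · exact replace_end (e := S) (m := 1) (by simp) (by simpa using hc) (by simp)
      · simpa only [mul_assoc] using overlap (Q := Q) hZ hU hp (ih hUw hc1 hc.symm)
    · rcases freeMonoid_mul_eq_mul_iff.1 hm with ⟨e, hte, he⟩ | ⟨e, rfl, rfl⟩
      · exact replace_end he hte rfl
      · have hSl : IsRelWord R (Z * e * S * l) := by simpa only [mul_assoc] using hW
        exact absurd (hSw.eq_one_and_eq_one hC2 hSl).2 hl

end HasLooseSuffix

end LooseSuffix

section RightCancellation

theorem exists_of_presCon_mul_of (heq : IsEquivPres R) (hC : SmallOverlapC R 3)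
    (hR : RightReduced R) {a : A} (h : presCon R (u * of a) y) :
    (∃ u', y = u' * of a ∧ presCon R u u') ∨
      ∃ S W p, (S * of a, W) ∈ R ∧ presCon R u (p * S) ∧ HasLooseSuffix R p W y := by
  have hC2 : SmallOverlapC R 2 := hC.mono (by norm_num)
  refine presCon_induction heq h ?_ ?_
  · exact .inl ⟨u, rfl, (presCon R).refl u⟩
  rintro r T T' l hT (⟨u', hy, hu⟩ | ⟨S, W, p, hSW, hu, hW⟩)
  · rcases freeMonoid_eq_one_or_exists_eq_mul_of l with rfl | ⟨l, b, rfl⟩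
    · obtain ⟨S, b, rfl⟩ := (freeMonoid_eq_one_or_exists_eq_mul_of T).resolve_left
        ((isRelWord_left hT).ne_one hC2)
      rw [mul_one, ← mul_assoc, freeMonoid_mul_of_eq_mul_of_iff] at hy
      obtain ⟨rfl, rfl⟩ := hy
      exact .inr ⟨S, T', r, hT, hu, by simpa using .suffix ((presCon R).refl r)⟩
    · rw [← mul_assoc, freeMonoid_mul_of_eq_mul_of_iff] at hy
      obtain ⟨rfl, rfl⟩ := hy
      refine .inl ⟨r * T' * l, by simp only [mul_assoc], (presCon R).trans hu ?_⟩
      exact presCon_mul_right l (presCon_mul_left r (presCon_of_mem hT))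
  · have hWw : IsRelWord R W := isRelWord_right hSW
    rcases eq_or_ne l 1 with rfl | hl
    · rw [mul_one] at hW ⊢
      obtain ⟨-, rfl⟩ := hW.eq_one_and_eq_of_overlap hC hWw (m := 1)
        (by simpa using isRelWord_left hT) (Or.inl rfl)
      have hpr : presCon R p r := hW.presCon_of_mul hC hR hWw
      exact .inr ⟨S, T', p, heq.trans hSW hT, hu, .suffix hpr⟩
    · exact .inr ⟨S, W, p, hSW, hu, hW.rewrite heq hC hR hT hWw hl⟩

theorem presCon_of_presCon_mul_of (heq : IsEquivPres R) (hC : SmallOverlapC R 3)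
    (hR : RightReduced R) {a : A} (h : presCon R (u * of a) (v * of a)) : presCon R u v := by
  rcases exists_of_presCon_mul_of heq hC hR h with ⟨u', hv, hu⟩ | ⟨S, W, p, hSW, hu, hW⟩
  · rwa [mul_right_cancel hv]
  obtain ⟨Z, Q, t, rfl, hv, hZ, ht⟩ := hW.exists_split
  rcases freeMonoid_eq_one_or_exists_eq_mul_of Q with rfl | ⟨Q, b, rfl⟩
  · exact absurd (isRelWord_right hSW) (by simpa using hZ.not_isRelWord (hC.mono (by norm_num)))
  · rw [← mul_assoc, freeMonoid_mul_of_eq_mul_of_iff] at hv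
    obtain ⟨rfl, rfl⟩ := hv
    obtain rfl : S = Z * Q := hR a S (Z * Q) (by simpa only [mul_assoc] using hSW)
    exact (presCon R).trans hu (by simpa only [mul_assoc] using presCon_mul_right Q ht)

theorem presCon_of_presCon_mul_right (heq : IsEquivPres R) (hC : SmallOverlapC R 3)
    (hR : RightReduced R) (h : presCon R (u * x) (v * x)) : presCon R u v := by
  induction x using FreeMonoid.inductionOn' generalizing u v with
  | one => simpa using h
  | of_mul a x ih =>
    simp only [← mul_assoc] at h
    exact presCon_of_presCon_mul_of heq hC hR (ih h)

theorem rightReduced_of_rightCancel (heq : IsEquivPres R) (hC : SmallOverlapC R 2)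
    (hcancel : ∀ x y z : (presCon R).Quotient, y * x = z * x → y = z) : RightReduced R := by
  intro a r s h
  have hrs : presCon R r s :=
    (Con.eq _).1 (hcancel (of a : FreeMonoid A) r s ((Con.eq _).2 (presCon_of_mem h)))
  exact eq_of_presCon_of_isRelWord_mul heq hC (isRelWord_left h) (of_ne_one a) hrs

theorem rightCancel_of_rightReduced (heq : IsEquivPres R) (hC : SmallOverlapC R 3)
    (hR : RightReduced R) (x y z : (presCon R).Quotient) (h : y * x = z * x) : y = z := by
  induction x using Con.induction_on with | _ x =>
  induction y using Con.induction_on with | _ y =>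
  induction z using Con.induction_on with | _ z =>
  exact (Con.eq _).2 (presCon_of_presCon_mul_right heq hC hR ((Con.eq _).1 h))

end RightCancellation

end Presentation

theorem statement14_general {A : Type*} (R : Set (FreeMonoid A × FreeMonoid A))
    (heq : IsEquivPres R) (hC : SmallOverlapC R 3) :
    (∀ x y z : (presCon R).Quotient, y * x = z * x → y = z) ↔
      ¬ ∃ (a : A) (r s : FreeMonoid A), r ≠ s ∧ (r * of a, s * of a) ∈ R := by
  constructor
  · rintro hcancel ⟨a, r, s, hrs, h⟩
    exact hrs (rightReduced_of_rightCancel heq (hC.mono (by norm_num)) hcancel a r s h)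
  · intro hno
    have hR : RightReduced R := fun a r s h => by_contra fun hrs => hno ⟨a, r, s, hrs, h⟩
    exact rightCancel_of_rightReduced heq hC hR

/-- **Theorem.** The monoid presented by a C(4) equivalence presentation `⟨A|R⟩` is
right cancellative if and only if `R` contains no relation of the form `(r a, s a)`
with `a ∈ A` and `r ≠ s`. -/
theorem statement14 {A : Type*} (R : Set (FreeMonoid A × FreeMonoid A))
    (heq : IsEquivPres R) (hC : SmallOverlapC R 4) :
    (∀ x y z : (presCon R).Quotient, y * x = z * x → y = z) ↔
      ¬ ∃ (a : A) (r s : FreeMonoid A), r ≠ s ∧ (r * of a, s * of a) ∈ R := by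
  exact statement14_general R heq (hC.mono (by norm_num))
end

section
/- Let A be a finite alphabet with |A| ≥ 2 and let k be a positive integer. For each n, among all presentations ⟨A|R⟩ where R is a set of exactly k relations and the sum relation length is n, let p_C(n) denote the proportion of those presentations whose presented monoid is cancellative (both left and right cancellative). Then p_C(n) → ((|A|-1)/|A|)^{2k} as n → ∞. -/
open FreeMonoid

/-- The number of `k`-relation presentations over `A` of sum relation length `n`
satisfying the predicate `P`. -/
noncomputable def presCount {A : Type*} (k n : ℕ)
    (P : Set (FreeMonoid A × FreeMonoid A) → Prop) : ℕ :=
  Nat.card {R : Finset (FreeMonoid A × FreeMonoid A) //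
    R.card = k ∧ ∑ p ∈ R, (p.1.length + p.2.length) = n ∧
    P (↑R : Set (FreeMonoid A × FreeMonoid A))}

/-!
In a random presentation the relation words are long, and a given factor of logarithmic length is
unlikely to occur in two places. With probability tending to one, every piece is thus shorter than a
third of each relation word, and the presentation satisfies a strong small overlap condition. Under
this condition a letter created by applying a relation can only be destroyed by undoing that
application, so that common first letters can be cancelled from derivations by induction on the
number of steps. Hence the monoid is left cancellative exactly if the two sides of each relation
start with different letters, and dually on the right. First and last letters of `k` pairs of
random words are `2 * k` independent pairs of uniform letters, each of them made of different
letters with probability `(|A| - 1) / |A|`.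

Presentations are sets of relations, while probabilities are computed with tuples of `2 * k` words.
A set of `k` relations comes from `k!` tuples, and almost all tuples have pairwise different
relations.
-/

section Rewriting

variable {α : Type*} {rel : List α → List α → Prop}

/-- `DerivesIn rel n u v`: the word `u` can be rewritten to `v` by exactly `n` applications of
relations `rel r r'`, each replacing a factor `r` by `r'`. The number of steps is recorded because
cancellation is proved by induction on it. -/
inductive DerivesIn (rel : List α → List α → Prop) : ℕ → List α → List α → Prop
  | refl (w : List α) : DerivesIn rel 0 w w
  | head {n : ℕ} {r r' z : List α} (p s : List α) (hr : rel r r')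
      (h : DerivesIn rel n (p ++ r' ++ s) z) : DerivesIn rel (n + 1) (p ++ r ++ s) z

/-- `Derives rel u v`: the word `u` can be rewritten to `v` using the relations `rel`. -/
def Derives (rel : List α → List α → Prop) (u v : List α) : Prop := ∃ n, DerivesIn rel n u v

namespace DerivesIn

variable {n m : ℕ} {u v w x z : List α}

theorem single {r r' : List α} (hr : rel r r') : DerivesIn rel 1 r r' := by
  simpa using head [] [] hr (refl _)

theorem trans (h : DerivesIn rel n u v) (h' : DerivesIn rel m v w) :
    DerivesIn rel (n + m) u w := by
  induction h with
  | refl => simpa using h'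
  | head p s hr _ ih => rw [Nat.add_right_comm]; exact head p s hr (ih h')

theorem append_append (x y : List α) (h : DerivesIn rel n u v) :
    DerivesIn rel n (x ++ u ++ y) (x ++ v ++ y) := by
  induction h with
  | refl => exact refl _
  | head p s hr _ ih => simpa using head (x ++ p) (s ++ y) hr (by simpa using ih)

theorem append_left (x : List α) (h : DerivesIn rel n u v) :
    DerivesIn rel n (x ++ u) (x ++ v) := by
  simpa using h.append_append x []

theorem symm (hs : ∀ {r r'}, rel r r' → rel r' r) (h : DerivesIn rel n u v) :
    DerivesIn rel n v u := by
  induction h with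
  | refl => exact refl _
  | head p s hr _ ih => exact ih.trans ((single (hs hr)).append_append p s)

theorem reverse (h : DerivesIn rel n u v) :
    DerivesIn (List.reverse ⁻¹'o rel) n u.reverse v.reverse := by
  induction h with
  | refl => exact refl _
  | @head _ r r' _ p s hr _ ih =>
    simpa using head (rel := List.reverse ⁻¹'o rel) (r := r.reverse) (r' := r'.reverse)
      s.reverse p.reverse (by simpa [Order.Preimage] using hr) (by simpa using ih)

theorem exists_append_or_exists_lt (h : DerivesIn rel n (x ++ w) z) :
    (∃ z', z = x ++ z' ∧ DerivesIn rel n w z') ∨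
    ∃ i j w' p r r' s, i + j + 1 = n ∧ DerivesIn rel i w w' ∧ rel r r' ∧ x ++ w' = p ++ r ++ s ∧
      p.length < x.length ∧ DerivesIn rel j (p ++ r' ++ s) z := by
  generalize hW : x ++ w = W at h
  induction h generalizing w with
  | refl => exact Or.inl ⟨w, hW.symm, refl w⟩
  | @head n r r' z p s hr h ih =>
    by_cases hp : p.length < x.length
    · exact Or.inr ⟨0, n, w, p, r, r', s, by omega, refl w, hr, hW, hp, h⟩
    have hxp : x <+: p :=
      List.prefix_of_prefix_length_le ⟨w, hW⟩ ⟨r ++ s, by simp⟩ (by omega)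
    obtain ⟨q, rfl⟩ := hxp
    obtain rfl : w = q ++ r ++ s := by simpa using hW
    rcases ih (w := q ++ r' ++ s) (by simp) with
      ⟨z', rfl, hz⟩ | ⟨i, j, w', p', t, t', s', hij, hw', htouch⟩
    · exact Or.inl ⟨z', rfl, head q s hr hz⟩
    · exact Or.inr ⟨i + 1, j, w', p', t, t', s', by omega, head q s hr hw', htouch⟩

end DerivesIn

theorem derives_reverse_iff {u v : List α} :
    Derives (List.reverse ⁻¹'o rel) u v ↔ Derives rel u.reverse v.reverse := by
  have hrel : List.reverse ⁻¹'o (List.reverse ⁻¹'o rel) = rel := by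
    ext
    simp [Order.Preimage]
  constructor
  · rintro ⟨n, h⟩
    exact ⟨n, hrel ▸ h.reverse⟩
  · rintro ⟨n, h⟩
    exact ⟨n, by simpa using h.reverse⟩

/-- A metric small overlap condition on a system of relations: each relation word has length at
least `3 * l`, while no factor of length `l` occurs at two different places in the relation
words. Every piece is then shorter than a third of each relation word. -/
structure MetricSmallOverlap (rel : List α → List α → Prop) (l : ℕ) : Prop where
  pos : 0 < l
  symm : ∀ {r r'}, rel r r' → rel r' r
  le_length : ∀ {r r'}, rel r r' → 3 * l ≤ r.length
  right_unique : ∀ {r r' r''}, rel r r' → rel r r'' → r' = r''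
  ne : ∀ {r r'}, rel r r' → r ≠ r'
  eq_of_factor_eq : ∀ {u u' v v' p q}, rel u u' → rel v v' → p + l ≤ u.length →
    q + l ≤ v.length → (u.drop p).take l = (v.drop q).take l → u = v ∧ p = q

namespace MetricSmallOverlap

variable {l n : ℕ}

theorem exists_eq_cons (H : MetricSmallOverlap rel l) {r r' : List α} (hr : rel r r') :
    ∃ a t, r = a :: t := by
  refine List.exists_cons_of_length_pos ?_
  have := H.pos
  have := H.le_length hr
  omega

theorem eq_of_overlap (H : MetricSmallOverlap rel l) {u u' v v' u₁ v₁ p q w : List α}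
    (hu : rel u u') (hv : rel v v') (hu₁ : u₁ <+: u) (hv₁ : v₁ <+: v)
    (hp : p ++ u₁ <+: w) (hq : q ++ v₁ <+: w) (hpq : p.length ≤ q.length)
    (hlu : q.length + l ≤ p.length + u₁.length) (hlv : l ≤ v₁.length) :
    u = v ∧ p.length = q.length := by
  have hlen := hu₁.length_le
  have hlen' := hv₁.length_le
  have hfactor : (u.drop (q.length - p.length)).take l = (v.drop 0).take l := by
    obtain ⟨u₂, rfl⟩ := hu₁
    obtain ⟨v₂, rfl⟩ := hv₁
    obtain ⟨s, rfl⟩ := hp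
    obtain ⟨s', hs'⟩ := hq
    have := congrArg (fun w => (w.drop q.length).take l) hs'
    simp only [List.append_assoc, List.drop_left] at this
    rw [List.take_append_of_le_length hlv, List.drop_append, List.drop_of_length_le hpq,
      List.nil_append, List.drop_append_of_le_length (by omega),
      List.take_append_of_le_length (by simp only [List.length_drop]; omega)] at this
    rw [List.drop_append_of_le_length (by omega),
      List.take_append_of_le_length (by simp only [List.length_drop]; omega), List.drop_zero,
      List.take_append_of_le_length hlv, this]
  obtain ⟨rfl, hpos⟩ := H.eq_of_factor_eq hu hv (by omega) (by omega) hfactor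
  exact ⟨rfl, by omega⟩

theorem length_lt_of_prefix_tail (H : MetricSmallOverlap rel l) {a : α}
    {v v' p q r r' w : List α} (hv : rel (a :: v) v') (hp : p <+: v) (hr : rel r r')
    (hq : q ++ r <+: p ++ w) : p.length < q.length + l := by
  by_contra! hle
  have := H.le_length hr
  have := (H.eq_of_overlap (p := []) (q := a :: q) (u₁ := a :: p) (w := a :: (p ++ w)) hv hr
    (by simpa using hp) List.prefix_rfl (by simp) (by simpa using hq) (by simp)
    (by simp only [List.length_cons, List.length_nil]; omega) (by omega)).2
  simp at this

/-- Once `r` has been replaced by `a :: t` right after `p`, the first rewriting step disturbing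
`p ++ [a]` can only undo that replacement. -/
theorem prefix_or_undone (H : MetricSmallOverlap rel l) {a : α} {t r p s z : List α}
    (hr : rel (a :: t) r)
    (hp : ∀ {q r₂ r₂' w}, rel r₂ r₂' → q ++ r₂ <+: p ++ w → p.length < q.length + l)
    (hkeep : ∀ i < n, ∀ {w}, DerivesIn rel i (t ++ s) w → t.take (t.length + 1 - l) <+: w)
    (h : DerivesIn rel n (p ++ (a :: t) ++ s) z) :
    p ++ [a] <+: z ∨ ∃ i j s', i + j + 1 = n ∧ DerivesIn rel i (t ++ s) (t ++ s') ∧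
      DerivesIn rel j (p ++ r ++ s') z := by
  rcases DerivesIn.exists_append_or_exists_lt (x := p ++ [a]) (w := t ++ s) (by simpa using h) with
    ⟨z', rfl, -⟩ | ⟨i, j, w, q, r₂, r₂', s', hij, hw, hr₂, hocc, hq, hz⟩
  · exact Or.inl (List.prefix_append _ _)
  have hqr₂ : q ++ r₂ <+: p ++ (a :: w) := ⟨s', by simpa using hocc.symm⟩
  have hqp := hp hr₂ hqr₂
  have hlen₂ := H.le_length hr₂
  have hlen := H.le_length hr
  simp only [List.length_append, List.length_cons, List.length_nil] at hq hlen
  have hkept := hkeep i (by omega) hw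
  obtain ⟨rfl, hpos⟩ := H.eq_of_overlap (p := q) (q := p)
    (v₁ := a :: t.take (t.length + 1 - l)) hr₂ hr
    List.prefix_rfl (by simpa using List.take_prefix _ t) hqr₂ (by simpa using hkept)
    (by omega) (by omega) (by simp only [List.length_cons, List.length_take]; omega)
  obtain rfl := H.right_unique hr hr₂
  obtain ⟨rfl, hrest⟩ := List.append_inj (s₁ := p) (s₂ := q) (t₁ := a :: w)
    (t₂ := (a :: t) ++ s') (by simpa using hocc) hpos.symm
  obtain rfl : w = t ++ s' := by simpa using hrest
  exact Or.inr ⟨i, j, s', hij, hw, hz⟩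

theorem take_tail_prefix (H : MetricSmallOverlap rel l) {a : α} {v v' y z : List α}
    (hv : rel (a :: v) v') (h : DerivesIn rel n (v ++ y) z) :
    v.take (v.length + 1 - l) <+: z := by
  induction n using Nat.strong_induction_on generalizing a v v' y z with
  | _ n ih =>
  rcases h.exists_append_or_exists_lt with
    ⟨z', rfl, -⟩ | ⟨i, j, w, p, r, r', s, hij, -, hr, hocc, hp, hz⟩
  · exact (List.take_prefix _ v).trans (List.prefix_append v z')
  have hpv : p <+: v :=
    List.prefix_of_prefix_length_le (l₃ := v ++ w) ⟨r ++ s, by simp [hocc]⟩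
      (List.prefix_append v w) hp.le
  have hvp : v.length < p.length + l :=
    H.length_lt_of_prefix_tail hv List.prefix_rfl hr (q := p) (w := w) ⟨s, hocc.symm⟩
  obtain ⟨b, t, rfl⟩ := H.exists_eq_cons (H.symm hr)
  rcases H.prefix_or_undone (H.symm hr) (H.length_lt_of_prefix_tail hv hpv)
      (fun i hi _ => ih i (by omega) (H.symm hr)) hz with hpz | ⟨i', j', s', hij', -, hz'⟩
  · have htake : v.take (v.length + 1 - l) <+: p :=
      List.prefix_of_prefix_length_le (List.take_prefix _ v) hpv
        (by simp only [List.length_take]; omega)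
    exact htake.trans ((List.prefix_append p [b]).trans hpz)
  · have hvpr : v <+: p ++ r := by
      have := H.le_length hr
      exact List.prefix_of_prefix_length_le (l₃ := v ++ w) (List.prefix_append v w)
        ⟨s, hocc.symm⟩ (by simp only [List.length_append]; omega)
    obtain ⟨e, he⟩ := hvpr
    exact ih j' (by omega) hv (y := e ++ s') (by simpa [← he] using hz')

/-- Removing a common first letter never lengthens a derivation; this makes the induction work,
since a word can then be cancelled letter by letter. -/
theorem exists_derivesIn_of_cons (H : MetricSmallOverlap rel l)
    (hhead : ∀ r r', rel r r' → r.head? ≠ r'.head?) {a : α} {w w' : List α}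
    (h : DerivesIn rel n (a :: w) (a :: w')) : ∃ m ≤ n, DerivesIn rel m w w' := by
  induction n using Nat.strong_induction_on generalizing a w w' with
  | _ n ih =>
  have ih_append (m : ℕ) (hm : m < n) (x w w' : List α)
      (h : DerivesIn rel m (x ++ w) (x ++ w')) : ∃ m' ≤ m, DerivesIn rel m' w w' := by
    induction x generalizing m with
    | nil => exact ⟨m, le_rfl, h⟩
    | cons b x ihx =>
      obtain ⟨m₁, hm₁, h₁⟩ := ih m hm h
      obtain ⟨m₂, hm₂, h₂⟩ := ihx m₁ (by omega) h₁
      exact ⟨m₂, hm₂.trans hm₁, h₂⟩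
  rcases DerivesIn.exists_append_or_exists_lt (x := [a]) h with
    ⟨z', hz, hw⟩ | ⟨i, j, w₁, p, r, r', s, hij, hw₁, hr, hocc, hp, hz⟩
  · obtain rfl : w' = z' := by simpa using hz
    exact ⟨n, le_rfl, hw⟩
  obtain rfl : p = [] := by simpa using hp
  obtain ⟨c, t, rfl⟩ := H.exists_eq_cons hr
  obtain ⟨b, t', rfl⟩ := H.exists_eq_cons (H.symm hr)
  obtain ⟨rfl, rfl⟩ : a = c ∧ w₁ = t ++ s := by simpa using hocc
  rcases H.prefix_or_undone (p := []) (H.symm hr) (fun _ _ => by have := H.pos; simp; omega)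
      (fun i _ _ hw => H.take_tail_prefix (H.symm hr) hw) hz with hb | ⟨i', j', s', hij', hs, hz'⟩
  · have hba : b = a := by simpa using hb
    exact absurd (by simp [hba]) (hhead _ _ hr)
  · obtain ⟨m, hm, hss'⟩ := ih_append i' (by omega) t' s s' hs
    have hws' : DerivesIn rel (i + m) w (t ++ s') := hw₁.trans (hss'.append_left t)
    have haw : DerivesIn rel (i + m + j') (a :: w) (a :: w') :=
      (hws'.append_left [a]).trans (by simpa using hz')
    obtain ⟨m', hm', h'⟩ := ih _ (by omega) haw
    exact ⟨m', by omega, h'⟩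

theorem derives_of_append (H : MetricSmallOverlap rel l)
    (hhead : ∀ r r', rel r r' → r.head? ≠ r'.head?) {x w w' : List α}
    (h : Derives rel (x ++ w) (x ++ w')) : Derives rel w w' := by
  induction x with
  | nil => exact h
  | cons a x ih =>
    obtain ⟨n, h⟩ := h
    obtain ⟨m, -, h'⟩ := H.exists_derivesIn_of_cons hhead h
    exact ih ⟨m, h'⟩

theorem not_derives_tails (H : MetricSmallOverlap rel l) {a : α} {u v : List α}
    (h : rel (a :: u) (a :: v)) : ¬ Derives rel u v := by
  rintro ⟨_, _ | @⟨_, r, _, _, p, s, hr, -⟩⟩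
  · exact H.ne h rfl
  · have hlen := H.le_length hr
    have := H.length_lt_of_prefix_tail (q := p) (w := []) h List.prefix_rfl hr ⟨s, by simp⟩
    simp only [List.length_append] at this
    omega

theorem left_cancel_iff (H : MetricSmallOverlap rel l) :
    (∀ x y z, Derives rel (x ++ y) (x ++ z) → Derives rel y z) ↔
      ∀ r r', rel r r' → r.head? ≠ r'.head? := by
  refine ⟨fun hcancel r r' hr hhead => ?_, fun hhead x y z h => H.derives_of_append hhead h⟩
  obtain ⟨a, u, rfl⟩ := H.exists_eq_cons hr
  obtain ⟨b, v, rfl⟩ := H.exists_eq_cons (H.symm hr)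
  obtain rfl : a = b := by simpa using hhead
  exact H.not_derives_tails hr (hcancel [a] u v ⟨1, .single hr⟩)

theorem reverse (H : MetricSmallOverlap rel l) :
    MetricSmallOverlap (List.reverse ⁻¹'o rel) l where
  pos := H.pos
  symm h := H.symm h
  le_length h := by simpa using H.le_length h
  right_unique h h' := List.reverse_injective (H.right_unique h h')
  ne h h' := H.ne h (congrArg _ h')
  eq_of_factor_eq {u u' v v' p q} hu hv hp hq huv := by
    have hfactor {w : List α} {i : ℕ} (hi : i + l ≤ w.length) :
        (w.reverse.drop (w.length - l - i)).take l = ((w.drop i).take l).reverse := by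
      rw [List.drop_reverse, List.take_reverse, List.drop_take]
      simp only [List.length_take]
      congr 3 <;> omega
    have h := H.eq_of_factor_eq (p := u.length - l - p) (q := v.length - l - q) hu hv
      (by simp only [List.length_reverse]; omega) (by simp only [List.length_reverse]; omega)
      (by rw [hfactor hp, hfactor hq, huv])
    obtain rfl : u = v := List.reverse_injective h.1
    exact ⟨rfl, by omega⟩

theorem right_cancel_iff (H : MetricSmallOverlap rel l) :
    (∀ x y z, Derives rel (y ++ x) (z ++ x) → Derives rel y z) ↔
      ∀ r r', rel r r' → r.getLast? ≠ r'.getLast? := by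
  have h := H.reverse.left_cancel_iff
  simp only [derives_reverse_iff, List.reverse_append, Order.Preimage] at h
  constructor
  · intro hcancel r r' hr
    have := h.1 (fun x y z => hcancel _ _ _) r.reverse r'.reverse (by simpa using hr)
    simpa using this
  · intro hlast x y z hxyz
    have := h.2 (fun r r' hr => by simpa using hlast _ _ hr) x.reverse y.reverse z.reverse
      (by simpa using hxyz)
    simpa using this

end MetricSmallOverlap

end Rewriting

section Presentation

variable {A : Type*}

/-- The relations of a presentation, read in both directions, as a relation between words. -/
def presRel (R : Set (FreeMonoid A × FreeMonoid A)) : List A → List A → Prop :=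
  Relation.SymmGen fun u v => (ofList u, ofList v) ∈ R

/-- The monoid presented by `R` is left and right cancellative. -/
def PresentsCancellative (R : Set (FreeMonoid A × FreeMonoid A)) : Prop :=
  (∀ x y z : (presCon R).Quotient, x * y = x * z → y = z) ∧
    ∀ x y z : (presCon R).Quotient, y * x = z * x → y = z

/-- The words `u` and `v` have different first letters and different last letters. -/
def DistinctEnds (u v : List A) : Prop := u.head? ≠ v.head? ∧ u.getLast? ≠ v.getLast?

variable {R : Set (FreeMonoid A × FreeMonoid A)}

theorem presCon_ofList_of_presRel {r r' : List A} (h : presRel R r r') :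
    presCon R (ofList r) (ofList r') := by
  rcases h with h | h
  · exact ConGen.Rel.of _ _ h
  · exact (presCon R).symm (ConGen.Rel.of _ _ h)

theorem DerivesIn.presCon_ofList {n : ℕ} {u v : List A} (h : DerivesIn (presRel R) n u v) :
    presCon R (ofList u) (ofList v) := by
  induction h with
  | refl => exact (presCon R).refl _
  | head p s hr _ ih =>
    refine (presCon R).trans ?_ ih
    simp only [ofList_append]
    exact (presCon R).mul ((presCon R).mul ((presCon R).refl _) (presCon_ofList_of_presRel hr))
      ((presCon R).refl _)

theorem presCon_iff_derives {u v : FreeMonoid A} :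
    presCon R u v ↔ Derives (presRel R) u.toList v.toList := by
  constructor
  · let c : Con (FreeMonoid A) :=
      { r := fun u v => Derives (presRel R) u.toList v.toList
        iseqv := ⟨fun _ => ⟨0, .refl _⟩, fun ⟨n, h⟩ => ⟨n, h.symm Relation.SymmGen.symm⟩,
          fun ⟨n, h⟩ ⟨m, h'⟩ => ⟨n + m, h.trans h'⟩⟩
        mul' := fun {w x y z} ⟨n, h⟩ ⟨m, h'⟩ => ⟨n + m, by
          simpa using (h.append_append [] y.toList).trans (h'.append_left x.toList)⟩ }
    have hle : presCon R ≤ c := Con.conGen_le.2 fun u v h => ⟨1, .single (Or.inl h)⟩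
    exact fun h => hle h
  · rintro ⟨n, h⟩
    exact h.presCon_ofList

theorem forall_presCon_quotient {p : (presCon R).Quotient → Prop} :
    (∀ x, p x) ↔ ∀ w : List A, p (ofList w : FreeMonoid A) :=
  (Quotient.mk_surjective (s := (presCon R).toSetoid)).forall

theorem presentsCancellative_iff_derives :
    PresentsCancellative R ↔
      (∀ x y z, Derives (presRel R) (x ++ y) (x ++ z) → Derives (presRel R) y z) ∧
      ∀ x y z, Derives (presRel R) (y ++ x) (z ++ x) → Derives (presRel R) y z := by
  simp only [PresentsCancellative, forall_presCon_quotient, ← Con.coe_mul, Con.eq,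
    presCon_iff_derives, toList_mul, toList_ofList]

theorem MetricSmallOverlap.presentsCancellative_iff {l : ℕ}
    (H : MetricSmallOverlap (presRel R) l) :
    PresentsCancellative R ↔ ∀ r r', presRel R r r' → DistinctEnds r r' := by
  simp only [presentsCancellative_iff_derives, H.left_cancel_iff, H.right_cancel_iff,
    DistinctEnds, imp_and, forall_and]

end Presentation

section RelationTuple

variable {ι κ A : Type*} {l : ℕ}

/-- A tuple of pairs of words, regarded as a family of relations: the relation `i` has the sides
`f (i, false)` and `f (i, true)`. -/
def relationsOf : (κ × Bool → List A) ≃ (κ → FreeMonoid A × FreeMonoid A) :=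
  (Equiv.curry κ Bool (List A)).trans <| Equiv.piCongrRight fun _ =>
    (Equiv.boolArrowEquivProd (List A)).trans (Equiv.prodCongr ofList ofList)

/-- No factor of length `l` occurs at two different places in the words of the family `f`. -/
def RepeatFree (l : ℕ) (f : ι → List A) : Prop :=
  ∀ ⦃i j p q⦄, p + l ≤ (f i).length → q + l ≤ (f j).length →
    ((f i).drop p).take l = ((f j).drop q).take l → i = j ∧ p = q

theorem relationsOf_apply (f : κ × Bool → List A) (i : κ) :
    relationsOf f i = (ofList (f (i, false)), ofList (f (i, true))) := rfl

theorem presRel_range_relationsOf {f : κ × Bool → List A} {u v : List A} :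
    presRel (Set.range (relationsOf f)) u v ↔ ∃ i b, u = f (i, b) ∧ v = f (i, !b) := by
  simp [presRel, Relation.SymmGen, relationsOf_apply, exists_or, eq_comm, and_comm]

namespace RepeatFree

theorem injective {f : ι → List A} (h : RepeatFree l f) (hl : ∀ i, l ≤ (f i).length) :
    Function.Injective f := fun i j hij =>
  (h (p := 0) (q := 0) (by simpa using hl i) (by simpa using hl j) (by rw [hij])).1

variable {f : κ × Bool → List A}

theorem injective_relationsOf (h : RepeatFree l f) (hl : ∀ i, l ≤ (f i).length) :
    Function.Injective (relationsOf f) := by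
  intro i j hij
  simp only [relationsOf_apply, Prod.mk.injEq, EmbeddingLike.apply_eq_iff_eq] at hij
  exact congrArg Prod.fst (h.injective hl hij.1)

theorem metricSmallOverlap (h : RepeatFree l f) (hpos : 0 < l) (hl : ∀ i, 3 * l ≤ (f i).length) :
    MetricSmallOverlap (presRel (Set.range (relationsOf f))) l := by
  have hinj : Function.Injective f := h.injective fun i => by have := hl i; omega
  refine ⟨hpos, Relation.SymmGen.symm, ?_, ?_, ?_, ?_⟩ <;> simp only [presRel_range_relationsOf]
  · rintro _ _ ⟨i, b, rfl, rfl⟩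
    exact hl _
  · rintro _ _ _ ⟨i, b, rfl, rfl⟩ ⟨j, c, hij, rfl⟩
    obtain ⟨rfl, rfl⟩ := Prod.mk.inj (hinj hij)
    rfl
  · rintro _ _ ⟨i, b, rfl, rfl⟩ hb
    simpa using hinj hb
  · rintro _ _ _ _ p q ⟨i, b, rfl, rfl⟩ ⟨j, c, rfl, rfl⟩ hp hq hpq
    obtain ⟨hij, rfl⟩ := h hp hq hpq
    exact ⟨congrArg f hij, rfl⟩

theorem presentsCancellative_iff (h : RepeatFree l f) (hpos : 0 < l)
    (hl : ∀ i, 3 * l ≤ (f i).length) :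
    PresentsCancellative (Set.range (relationsOf f)) ↔
      ∀ i, DistinctEnds (f (i, false)) (f (i, true)) := by
  rw [(h.metricSmallOverlap hpos hl).presentsCancellative_iff]
  simp only [presRel_range_relationsOf]
  constructor
  · exact fun H i => H _ _ ⟨i, false, rfl, rfl⟩
  · rintro H _ _ ⟨i, b | b, rfl, rfl⟩
    · exact H i
    · exact (H i).imp Ne.symm Ne.symm

end RepeatFree

end RelationTuple

section PresentationCount

open Finset

/-- An enumeration of a finite set by `κ` is an embedding of `κ` with that set as its image. -/
theorem card_subtype_card_eq_mul_factorial {κ β : Type*} [Fintype κ] (Q : Finset β → Prop) :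
    Nat.card {R : Finset β // R.card = Fintype.card κ ∧ Q R} * (Fintype.card κ).factorial =
      Nat.card {e : κ ↪ β // Q (univ.map e)} := by
  classical
  let image (e : {e : κ ↪ β // Q (univ.map e)}) :
      {R : Finset β // R.card = Fintype.card κ ∧ Q R} :=
    ⟨univ.map e.1, by rw [card_map, card_univ], e.2⟩
  have hfiber (R : {R : Finset β // R.card = Fintype.card κ ∧ Q R}) :
      Nonempty (Equiv.Perm κ ≃ {e // image e = R}) := by
    let σ₀ : κ ≃ R.1 := Fintype.equivOfCardEq (by rw [Fintype.card_coe, R.2.1])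
    have himage (σ : κ ≃ R.1) : univ.map (σ.toEmbedding.trans (.subtype _)) = R.1 := by
      rw [← Finset.map_map, univ_map_equiv_to_embedding, univ_eq_attach, attach_map_val]
    let enum (σ : κ ≃ R.1) : {e // image e = R} :=
      ⟨⟨σ.toEmbedding.trans (.subtype _), by rw [himage]; exact R.2.2⟩, Subtype.ext (himage σ)⟩
    refine ⟨((Equiv.refl κ).equivCongr σ₀).trans (Equiv.ofBijective enum ⟨fun σ τ h => ?_, ?_⟩)⟩
    · ext i
      exact DFunLike.congr_fun (congrArg (fun e => e.1.1) h) i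
    · rintro ⟨e, rfl⟩
      exact ⟨(Equiv.subtypeUnivEquiv mem_univ).symm.trans (univ.equivMap e.1), rfl⟩
  rw [← Nat.card_congr (Equiv.sigmaFiberEquiv image),
    ← Nat.card_congr (Equiv.sigmaCongrRight fun R => (hfiber R).some),
    Nat.card_congr (Equiv.sigmaEquivProd _ _), Nat.card_prod, Nat.card_perm,
    Nat.card_eq_fintype_card (α := κ)]

/-- The tuples of words of total length `n`. -/
def tuplesOfTotalLength (ι A : Type*) [Fintype ι] (n : ℕ) : Set (ι → List A) :=
  {f | ∑ i, (f i).length = n}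

variable {κ A : Type*} [Fintype κ]

theorem sum_length_relationsOf (f : κ × Bool → List A) :
    ∑ i, ((relationsOf f i).1.length + (relationsOf f i).2.length) = ∑ i, (f i).length := by
  simp [Fintype.sum_prod_type, relationsOf_apply, FreeMonoid.length, add_comm]

theorem presCount_mul_factorial (n : ℕ) (P : Set (FreeMonoid A × FreeMonoid A) → Prop) :
    presCount (Fintype.card κ) n P * (Fintype.card κ).factorial =
      (tuplesOfTotalLength (κ × Bool) A n ∩ {f | Function.Injective (relationsOf f) ∧
        P (Set.range (relationsOf f))}).ncard := by
  rw [presCount, card_subtype_card_eq_mul_factorial, ← Nat.card_coe_set_eq]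
  symm
  refine Nat.card_congr (((relationsOf.subtypeEquiv (q := fun g =>
    ∑ i, ((g i).1.length + (g i).2.length) = n ∧ Function.Injective g ∧ P (Set.range g))
      fun f => ?_)).trans ⟨fun g => ⟨⟨g.1, g.2.2.1⟩, ?_⟩, fun e => ⟨e.1, ?_⟩,
        fun _ => rfl, fun _ => rfl⟩)
  · rw [sum_length_relationsOf]
    rfl
  · simpa using ⟨g.2.1, g.2.2.2⟩
  · exact ⟨by simpa using e.2.1, e.1.injective, by simpa using e.2.2⟩

end PresentationCount

section Proportion

variable {β : Type*} {S B C E : Set β}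

/-- The proportion of elements of the finite set `S` that lie in `B`. Its value is `0` if `S` is
empty. -/
noncomputable def proportion (S B : Set β) : ℝ := (S ∩ B).ncard / S.ncard

theorem proportion_nonneg : 0 ≤ proportion S B := by
  unfold proportion
  positivity

theorem proportion_le_one (hS : S.Finite) : proportion S B ≤ 1 :=
  div_le_one_of_le₀ (mod_cast Set.ncard_le_ncard Set.inter_subset_left hS) (by positivity)

theorem proportion_univ (hS : S.Finite) (hne : S.Nonempty) : proportion S Set.univ = 1 := by
  have : S.ncard ≠ 0 := (Set.ncard_pos hS).2 hne |>.ne'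
  rw [proportion, Set.inter_univ, div_self (mod_cast this)]

theorem proportion_eq_zero (h : Disjoint S B) : proportion S B = 0 := by
  rw [proportion, h.inter_eq, Set.ncard_empty, Nat.cast_zero, zero_div]

theorem proportion_congr (h : S ∩ B = S ∩ C) : proportion S B = proportion S C := by
  rw [proportion, proportion, h]

theorem proportion_mono (hS : S.Finite) (h : S ∩ B ⊆ C) : proportion S B ≤ proportion S C := by
  unfold proportion
  have := Set.ncard_le_ncard (Set.subset_inter Set.inter_subset_left h) (hS.inter_of_left C)
  gcongr

theorem proportion_union_le : proportion S (B ∪ C) ≤ proportion S B + proportion S C := by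
  rw [proportion, proportion, proportion, ← add_div, Set.inter_union_distrib_left]
  gcongr
  exact_mod_cast Set.ncard_union_le _ _

theorem proportion_biUnion_le {ι : Type*} (I : Finset ι) (B : ι → Set β) :
    proportion S (⋃ i ∈ I, B i) ≤ ∑ i ∈ I, proportion S (B i) := by
  simp only [proportion, ← Finset.sum_div, Set.inter_iUnion₂]
  gcongr
  exact_mod_cast I.set_ncard_biUnion_le fun i => S ∩ B i

theorem proportion_le_add_of_agree (hS : S.Finite) (h : ∀ x ∈ S, x ∉ E → x ∈ B → x ∈ C) :
    proportion S B ≤ proportion S C + proportion S E :=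
  (proportion_mono hS fun x hx =>
    or_iff_not_imp_right.2 fun hE => h x hx.1 hE hx.2).trans proportion_union_le

theorem abs_proportion_sub_le (hS : S.Finite) (h : ∀ x ∈ S, x ∉ E → (x ∈ B ↔ x ∈ C)) :
    |proportion S B - proportion S C| ≤ proportion S E := by
  have hBC := proportion_le_add_of_agree hS fun x hx hE => (h x hx hE).1
  have hCB := proportion_le_add_of_agree hS fun x hx hE => (h x hx hE).2
  rw [abs_sub_le_iff]
  constructor <;> linarith

theorem tendsto_proportion_of_agree {S B C E : ℕ → Set β} {c : ℝ} (hS : ∀ n, (S n).Finite)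
    (hagree : ∀ n, ∀ x ∈ S n, x ∉ E n → (x ∈ B n ↔ x ∈ C n))
    (hE : Filter.Tendsto (fun n => proportion (S n) (E n)) Filter.atTop (nhds 0))
    (hC : Filter.Tendsto (fun n => proportion (S n) (C n)) Filter.atTop (nhds c)) :
    Filter.Tendsto (fun n => proportion (S n) (B n)) Filter.atTop (nhds c) := by
  have hdiff := squeeze_zero_norm (f := fun n => proportion (S n) (B n) - proportion (S n) (C n))
    (fun n => abs_proportion_sub_le (hS n) (hagree n)) hE
  simpa using hdiff.add hC

end Proportion

section LengthVectors

open Finset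

theorem multichoose_mul_le (m n : ℕ) :
    Nat.multichoose m n * n ≤ Nat.multichoose (m + 1) n * m := by
  obtain _ | n := n
  · simp
  have h := Nat.choose_mul_succ_eq (m + n) (n + 1)
  rw [Nat.multichoose_eq, Nat.multichoose_eq, show m + (n + 1) - 1 = m + n by omega,
    show m + 1 + (n + 1) - 1 = m + n + 1 by omega]
  rw [show m + n + 1 - (n + 1) = m by omega] at h
  calc (m + n).choose (n + 1) * (n + 1) ≤ (m + n).choose (n + 1) * (m + n + 1) := by gcongr; omega
    _ = (m + n + 1).choose (n + 1) * m := h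

theorem monotone_multichoose_succ (m : ℕ) : Monotone (Nat.multichoose (m + 1)) :=
  monotone_nat_of_le_succ fun n => by
    rw [Nat.multichoose_succ_succ]
    exact Nat.le_add_left _ _

variable {ι : Type*} [DecidableEq ι]

theorem card_piAntidiag_nat (s : Finset ι) (n : ℕ) :
    #(piAntidiag s n) = Nat.multichoose #s n := by
  rw [← card_finsuppAntidiag_nat_eq_multichoose, finsuppAntidiag, card_map, card_attach]

variable [Fintype ι]

theorem card_piAntidiag_filter_apply_eq_le (n j : ℕ) (i : ι) :
    #{lam ∈ piAntidiag univ n | lam i = j} ≤ #(piAntidiag (univ.erase i) (n - j)) := by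
  refine (card_le_card fun lam hlam => mem_image.2 ⟨Function.update lam i 0, ?_, ?_⟩).trans
    (card_image_le (f := fun lam => Function.update lam i j))
  · obtain ⟨hsum, rfl⟩ : ∑ i, lam i = n ∧ lam i = j := by simpa using hlam
    rw [mem_piAntidiag, sum_update_of_notMem (notMem_erase _ _), ← hsum,
      ← add_sum_erase _ _ (mem_univ i), Nat.add_sub_cancel_left]
    refine ⟨rfl, fun x hx => ?_⟩
    rw [mem_erase]
    refine ⟨?_, mem_univ x⟩
    rintro rfl
    simp at hx
  · obtain ⟨-, rfl⟩ := mem_filter.1 hlam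
    simp

theorem card_piAntidiag_filter_apply_eq_mul_le [Nontrivial ι] (n j : ℕ) (i : ι) :
    #{lam ∈ piAntidiag univ n | lam i = j} * n ≤
      #(piAntidiag (univ : Finset ι) n) * Fintype.card ι := by
  obtain ⟨m, hm⟩ := Nat.exists_eq_add_of_lt (Fintype.one_lt_card (α := ι))
  have hcard : #(univ.erase i) = m + 1 := by rw [card_erase_of_mem (mem_univ i), card_univ]; omega
  calc _ ≤ Nat.multichoose (m + 1) (n - j) * n := by
        rw [← hcard, ← card_piAntidiag_nat]
        exact Nat.mul_le_mul_right n (card_piAntidiag_filter_apply_eq_le n j i)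
    _ ≤ Nat.multichoose (m + 1) n * n := by
        gcongr
        exact monotone_multichoose_succ m (Nat.sub_le n j)
    _ ≤ Nat.multichoose (m + 1 + 1) n * (m + 1) := multichoose_mul_le (m + 1) n
    _ ≤ _ := by
        rw [card_piAntidiag_nat, card_univ, hm, Nat.add_comm 1 m]
        exact Nat.mul_le_mul_left _ (Nat.le_succ _)

theorem card_piAntidiag_filter_exists_lt_mul_le [Nontrivial ι] (n L : ℕ) :
    #{lam ∈ piAntidiag (univ : Finset ι) n | ∃ i, lam i < L} * n ≤
      #(piAntidiag (univ : Finset ι) n) * (Fintype.card ι ^ 2 * L) := by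
  have hcover : {lam ∈ piAntidiag (univ : Finset ι) n | ∃ i, lam i < L} ⊆
      (univ ×ˢ range L).biUnion fun x => {lam ∈ piAntidiag univ n | lam x.1 = x.2} := by
    intro lam
    simp only [mem_filter, mem_biUnion, mem_product, mem_univ, true_and, mem_range, Prod.exists]
    rintro ⟨hlam, i, hi⟩
    exact ⟨i, lam i, hi, hlam, rfl⟩
  calc _ ≤ (∑ x ∈ univ ×ˢ range L, #{lam ∈ piAntidiag univ n | lam x.1 = x.2}) * n := by
        gcongr
        exact (card_le_card hcover).trans card_biUnion_le
    _ ≤ ∑ _x ∈ (univ : Finset ι) ×ˢ range L,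
        #(piAntidiag (univ : Finset ι) n) * Fintype.card ι := by
        rw [sum_mul]
        exact sum_le_sum fun x _ => card_piAntidiag_filter_apply_eq_mul_le n x.2 x.1
    _ = _ := by
        rw [sum_const, card_product, card_univ, card_range, smul_eq_mul]
        ring

end LengthVectors

section TupleCount

open Finset
open scoped BigOperators

variable {ι : Type*} {A : Type*}

theorem ncard_setOf_length_eq [Fintype A] (s : ℕ) :
    {u : List A | u.length = s}.ncard = Fintype.card A ^ s := by
  rw [← card_vector, ← Nat.card_eq_fintype_card, ← Nat.card_coe_set_eq]
  rfl

/-- The tuples of words with lengths prescribed by `lam`. -/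
def tuplesOfLengths (A : Type*) (lam : ι → ℕ) : Set (ι → List A) := {f | ∀ i, (f i).length = lam i}

theorem pairwise_disjoint_tuplesOfLengths :
    Pairwise (Function.onFun Disjoint (tuplesOfLengths (ι := ι) A)) := fun _ _ hne =>
  Set.disjoint_left.2 fun _ hf hf' => hne (funext fun i => (hf i).symm.trans (hf' i))

theorem tuplesOfLengths_eq_pi (lam : ι → ℕ) :
    tuplesOfLengths A lam = Set.univ.pi fun i => {u : List A | u.length = lam i} := by
  ext f
  simp [tuplesOfLengths]

theorem nonempty_tuplesOfLengths [Nonempty A] (lam : ι → ℕ) : (tuplesOfLengths A lam).Nonempty :=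
  ⟨fun i => List.replicate (lam i) (Classical.arbitrary A), fun _ => List.length_replicate⟩

theorem finite_tuplesOfLengths [Finite ι] [Finite A] (lam : ι → ℕ) :
    (tuplesOfLengths A lam).Finite := by
  rw [tuplesOfLengths_eq_pi]
  exact Set.Finite.pi fun i => List.finite_length_eq A (lam i)

variable [Fintype ι]

theorem nonempty_tuplesOfTotalLength [Nonempty ι] [Nonempty A] (n : ℕ) :
    (tuplesOfTotalLength ι A n).Nonempty := by
  classical
  let i : ι := Classical.arbitrary ι
  exact ⟨fun j => List.replicate (if j = i then n else 0) (Classical.arbitrary A), by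
    simp [tuplesOfTotalLength]⟩

theorem tuplesOfTotalLength_eq_iUnion [DecidableEq ι] (n : ℕ) :
    tuplesOfTotalLength ι A n = ⋃ lam ∈ piAntidiag (univ : Finset ι) n, tuplesOfLengths A lam := by
  ext f
  simp only [Set.mem_iUnion, exists_prop, mem_piAntidiag, mem_univ, implies_true, and_true]
  refine ⟨fun h => ⟨fun i => (f i).length, h, fun i => rfl⟩, ?_⟩
  rintro ⟨lam, h, hf⟩
  rwa [← funext hf] at h

theorem ncard_tuplesOfLengths [Fintype A] (lam : ι → ℕ) :
    (tuplesOfLengths A lam).ncard = Fintype.card A ^ ∑ i, lam i := by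
  rw [tuplesOfLengths_eq_pi, ← Nat.card_coe_set_eq, Nat.card_congr (Equiv.Set.univPi _),
    Nat.card_pi, ← prod_pow_eq_pow_sum]
  exact prod_congr rfl fun i _ => ncard_setOf_length_eq (lam i)

variable [Finite A]

theorem finite_tuplesOfTotalLength (n : ℕ) : (tuplesOfTotalLength ι A n).Finite := by
  classical
  rw [tuplesOfTotalLength_eq_iUnion]
  exact (finite_toSet _).biUnion fun lam _ => finite_tuplesOfLengths lam

theorem ncard_tuplesOfTotalLength_inter [DecidableEq ι] (n : ℕ) (B : Set (ι → List A)) :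
    (tuplesOfTotalLength ι A n ∩ B).ncard =
      ∑ lam ∈ piAntidiag univ n, (tuplesOfLengths A lam ∩ B).ncard := by
  rw [tuplesOfTotalLength_eq_iUnion, Set.iUnion₂_inter, ← finsum_mem_coe_finset]
  exact (finite_toSet _).ncard_biUnion (fun lam _ => (finite_tuplesOfLengths lam).inter_of_left B)
    fun _ _ _ _ hne => (pairwise_disjoint_tuplesOfLengths hne).mono Set.inter_subset_left
      Set.inter_subset_left

/-- Conditioning on the lengths: there are equally many tuples for each vector of lengths. -/
theorem proportion_tuplesOfTotalLength [DecidableEq ι] (n : ℕ) (B : Set (ι → List A)) :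
    proportion (tuplesOfTotalLength ι A n) B =
      𝔼 lam ∈ piAntidiag univ n, proportion (tuplesOfLengths A lam) B := by
  cases nonempty_fintype A
  have hcard : ∀ lam ∈ piAntidiag (univ : Finset ι) n,
      (tuplesOfLengths A lam).ncard = Fintype.card A ^ n := by
    intro lam hlam
    rw [ncard_tuplesOfLengths, (mem_piAntidiag.1 hlam).1]
  have htotal := ncard_tuplesOfTotalLength_inter (A := A) (ι := ι) n Set.univ
  simp only [Set.inter_univ] at htotal
  rw [sum_congr rfl hcard, sum_const, smul_eq_mul] at htotal
  have hprop : ∀ lam ∈ piAntidiag (univ : Finset ι) n, proportion (tuplesOfLengths A lam) B =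
      ((tuplesOfLengths A lam ∩ B).ncard : ℝ) / (Fintype.card A ^ n : ℕ) := by
    intro lam hlam
    rw [proportion, hcard lam hlam]
  rw [expect_eq_sum_div_card, sum_congr rfl hprop, ← sum_div, div_div, proportion, htotal,
    ncard_tuplesOfTotalLength_inter]
  push_cast
  rw [mul_comm]

theorem proportion_tuplesOfTotalLength_le {n : ℕ} {B : Set (ι → List A)} {c : ℝ} (hc : 0 ≤ c)
    (h : ∀ lam, ∑ i, lam i = n → proportion (tuplesOfLengths A lam) B ≤ c) :
    proportion (tuplesOfTotalLength ι A n) B ≤ c := by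
  classical
  rw [proportion_tuplesOfTotalLength]
  obtain hempty | hne := (piAntidiag (univ : Finset ι) n).eq_empty_or_nonempty
  · rwa [hempty, expect_empty]
  · exact expect_le hne fun lam hlam => h lam (mem_piAntidiag.1 hlam).1

theorem abs_proportion_tuplesOfTotalLength_sub_le [Nonempty ι] {n : ℕ} {B E : Set (ι → List A)}
    {c : ℝ} (h : ∀ lam, |proportion (tuplesOfLengths A lam) B - c| ≤
      proportion (tuplesOfLengths A lam) E) :
    |proportion (tuplesOfTotalLength ι A n) B - c| ≤ proportion (tuplesOfTotalLength ι A n) E := by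
  classical
  have hne : (piAntidiag (univ : Finset ι) n).Nonempty :=
    ⟨Pi.single (Classical.arbitrary ι) n, by simp [mem_piAntidiag]⟩
  rw [proportion_tuplesOfTotalLength, proportion_tuplesOfTotalLength, ← expect_const hne c,
    ← expect_sub_distrib]
  exact (abs_expect_le _ _).trans (expect_le_expect fun lam _ => h lam)

theorem proportion_exists_length_lt_le [Nontrivial ι] {n : ℕ} (hn : 0 < n) (L : ℕ) :
    proportion (tuplesOfTotalLength ι A n) {f | ∃ i, (f i).length < L} ≤
      Fintype.card ι ^ 2 * L / n := by
  classical
  have hle (lam : ι → ℕ) : proportion (tuplesOfLengths A lam) {f | ∃ i, (f i).length < L} ≤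
      if ∃ i, lam i < L then 1 else 0 := by
    split_ifs with hlam
    · exact proportion_le_one (finite_tuplesOfLengths lam)
    · refine (proportion_eq_zero (Set.disjoint_left.2 ?_)).le
      rintro f hf ⟨i, hi⟩
      exact hlam ⟨i, hf i ▸ hi⟩
  rw [proportion_tuplesOfTotalLength]
  refine (expect_le_expect fun lam _ => hle lam).trans ?_
  rw [expect_eq_sum_div_card, sum_boole]
  refine div_le_of_le_mul₀ (by positivity) (by positivity) ?_
  rw [div_mul_eq_mul_div, le_div_iff₀ (by exact_mod_cast hn), mul_comm _ (#_ : ℝ)]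
  exact_mod_cast card_piAntidiag_filter_exists_lt_mul_le n L

end TupleCount

section Repeats

open Finset

variable {ι A : Type*} {l p q : ℕ}

/-- If the factor of length `l` at position `q` repeats the one at an earlier position `p`, its
letters can be recovered from left to right, even if the two occurrences overlap. -/
theorem eq_of_repeat_of_take_eq_of_drop_eq {u v : List A} (hpq : p < q)
    (hu : (u.drop p).take l = (u.drop q).take l) (hv : (v.drop p).take l = (v.drop q).take l)
    (htake : u.take q = v.take q) (hdrop : u.drop (q + l) = v.drop (q + l)) : u = v := by
  have hrepeat {w : List A} (hw : (w.drop p).take l = (w.drop q).take l) {t : ℕ} (ht : t < l) :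
      w[p + t]? = w[q + t]? := by
    simpa [List.getElem?_take, ht] using congrArg (·[t]?) hw
  refine List.ext_getElem? fun s => ?_
  induction s using Nat.strong_induction_on with
  | _ s ih =>
  by_cases hsq : s < q
  · simpa [List.getElem?_take, hsq] using congrArg (·[s]?) htake
  obtain ⟨t, rfl⟩ := Nat.exists_eq_add_of_le (not_lt.1 hsq)
  by_cases ht : t < l
  · rw [← hrepeat hu ht, ← hrepeat hv ht]
    exact ih _ (by omega)
  · obtain ⟨t, rfl⟩ := Nat.exists_eq_add_of_le (not_lt.1 ht)
    simpa [Nat.add_assoc] using congrArg (·[t]?) hdrop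

/-- The families of words in which the factor of length `l` at position `q` of the word `j` repeats
the factor at position `p` of the word `i`. -/
def repeatAt (A : Type*) (l : ℕ) (i j : ι) (p q : ℕ) : Set (ι → List A) :=
  {f | ((f i).drop p).take l = ((f j).drop q).take l}

variable {i j : ι}

theorem exists_mem_repeatAt {f : ι → List A} (h : ¬ RepeatFree l f) :
    ∃ i j p q, p + l ≤ (f i).length ∧ q + l ≤ (f j).length ∧ (i ≠ j ∨ p < q) ∧
      f ∈ repeatAt A l i j p q := by
  simp only [RepeatFree, not_forall] at h
  obtain ⟨i, j, p, q, hp, hq, hpq, hne⟩ := h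
  by_cases hij : i = j
  · rcases lt_or_gt_of_ne fun h => hne ⟨hij, h⟩ with hlt | hlt
    · exact ⟨i, j, p, q, hp, hq, Or.inr hlt, hpq⟩
    · exact ⟨j, i, q, p, hq, hp, Or.inr hlt, hpq.symm⟩
  · exact ⟨i, j, p, q, hp, hq, Or.inl hij, hpq⟩

theorem injOn_delete_repeat [DecidableEq ι] (lam : ι → ℕ) (hne : i ≠ j ∨ p < q) :
    Set.InjOn (fun f => Function.update f j ((f j).take q ++ (f j).drop (q + l)))
      (tuplesOfLengths A lam ∩ repeatAt A l i j p q) := by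
  rintro f ⟨hf, hrf⟩ g ⟨hg, hrg⟩ hfg
  have hother (x : ι) (hx : x ≠ j) : f x = g x := by
    simpa [hx] using congrFun hfg x
  obtain ⟨htake, hdrop⟩ : (f j).take q = (g j).take q ∧ (f j).drop (q + l) = (g j).drop (q + l) :=
    List.append_inj (by simpa using congrFun hfg j) (by simp [hf j, hg j])
  have hj : f j = g j := by
    by_cases hij : i = j
    · subst hij
      exact eq_of_repeat_of_take_eq_of_drop_eq (hne.resolve_left (· rfl)) hrf hrg htake hdrop
    · have hmid : ((f j).drop q).take l = ((g j).drop q).take l := by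
        rw [← hrf, ← hrg, hother i hij]
      rw [← List.take_append_drop q (f j), ← List.take_append_drop l ((f j).drop q), htake, hmid,
        List.drop_drop, hdrop, ← List.drop_drop, List.take_append_drop, List.take_append_drop]
  funext x
  by_cases hx : x = j
  · rw [hx, hj]
  · exact hother x hx

variable [Fintype A]

theorem ncard_tuplesOfLengths_inter_repeatAt_mul_le [Finite ι] {lam : ι → ℕ} (hq : q + l ≤ lam j)
    (hne : i ≠ j ∨ p < q) :
    (tuplesOfLengths A lam ∩ repeatAt A l i j p q).ncard * Fintype.card A ^ l ≤
      (tuplesOfLengths A lam).ncard := by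
  classical
  cases nonempty_fintype ι
  have hle : (tuplesOfLengths A lam ∩ repeatAt A l i j p q).ncard ≤
      (tuplesOfLengths A (Function.update lam j (lam j - l))).ncard := by
    refine Set.ncard_le_ncard_of_injOn _ (fun f hf x => ?_) (injOn_delete_repeat lam hne)
      (finite_tuplesOfLengths _)
    by_cases hx : x = j
    · subst hx
      simp only [Function.update_self, List.length_append, List.length_take, List.length_drop,
        hf.1 x]
      omega
    · simp [hx, hf.1 x]
  have hsum : ∑ x, Function.update lam j (lam j - l) x + l = ∑ x, lam x := by
    rw [sum_update_of_mem (mem_univ j), ← add_sum_erase _ lam (mem_univ j),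
      sdiff_singleton_eq_erase]
    omega
  calc _ ≤ _ := Nat.mul_le_mul_right _ hle
    _ = _ := by rw [ncard_tuplesOfLengths, ncard_tuplesOfLengths, ← pow_add, hsum]

theorem proportion_tuplesOfLengths_repeatAt_le [Finite ι] [Nonempty A] {lam : ι → ℕ}
    (hq : q + l ≤ lam j) (hne : i ≠ j ∨ p < q) :
    proportion (tuplesOfLengths A lam) (repeatAt A l i j p q) ≤ ((Fintype.card A : ℝ) ^ l)⁻¹ := by
  have : (0 : ℝ) < Fintype.card A := by exact_mod_cast Fintype.card_pos
  refine div_le_of_le_mul₀ (by positivity) (by positivity) ?_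
  rw [le_inv_mul_iff₀ (by positivity), mul_comm]
  exact_mod_cast ncard_tuplesOfLengths_inter_repeatAt_mul_le hq hne

variable [Fintype ι]

theorem proportion_tuplesOfLengths_not_repeatFree_le [Nonempty A] {lam : ι → ℕ} {n : ℕ}
    (hn : ∑ i, lam i = n) :
    proportion (tuplesOfLengths A lam) {f | ¬ RepeatFree l f} ≤
      (Fintype.card ι * (n + 1)) ^ 2 / Fintype.card A ^ l := by
  classical
  have hlen (i : ι) : lam i ≤ n := hn ▸ single_le_sum (fun _ _ => Nat.zero_le _) (mem_univ i)
  let I : Finset ((ι × ι) × ℕ × ℕ) := univ ×ˢ range (n + 1) ×ˢ range (n + 1)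
  let I' := {x ∈ I | x.2.2 + l ≤ lam x.1.2 ∧ (x.1.1 ≠ x.1.2 ∨ x.2.1 < x.2.2)}
  have hcover : tuplesOfLengths A lam ∩ {f | ¬ RepeatFree l f} ⊆
      ⋃ x ∈ I', repeatAt A l x.1.1 x.1.2 x.2.1 x.2.2 := by
    rintro f ⟨hf, hrep⟩
    obtain ⟨i, j, p, q, hp, hq, hne, hmem⟩ := exists_mem_repeatAt hrep
    rw [hf] at hp hq
    have := hlen i
    have := hlen j
    refine Set.mem_biUnion (x := ((i, j), p, q)) ?_ hmem
    simp only [I', I, SetLike.mem_coe, mem_filter, mem_product, mem_univ, mem_range, true_and]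
    exact ⟨⟨by omega, by omega⟩, hq, hne⟩
  calc _ ≤ _ := proportion_mono (finite_tuplesOfLengths lam) hcover
    _ ≤ ∑ x ∈ I', proportion (tuplesOfLengths A lam) (repeatAt A l x.1.1 x.1.2 x.2.1 x.2.2) :=
        proportion_biUnion_le _ _
    _ ≤ ∑ _x ∈ I', ((Fintype.card A : ℝ) ^ l)⁻¹ := sum_le_sum fun x hx =>
        have hx := (mem_filter.1 hx).2
        proportion_tuplesOfLengths_repeatAt_le hx.1 hx.2
    _ ≤ ∑ _x ∈ I, ((Fintype.card A : ℝ) ^ l)⁻¹ :=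
        sum_le_sum_of_subset_of_nonneg (filter_subset _ _) fun _ _ _ => by positivity
    _ = _ := by
        simp only [I, sum_const, card_product, card_univ, card_range, Fintype.card_prod,
          nsmul_eq_mul]
        push_cast
        ring

theorem proportion_not_repeatFree_le [Nonempty A] (n : ℕ) :
    proportion (tuplesOfTotalLength ι A n) {f | ¬ RepeatFree l f} ≤
      (Fintype.card ι * (n + 1)) ^ 2 / Fintype.card A ^ l :=
  proportion_tuplesOfTotalLength_le (by positivity) fun _ hlam =>
    proportion_tuplesOfLengths_not_repeatFree_le hlam

end Repeats

section DistinctEnds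

open Finset

variable {κ A : Type*} [Fintype κ]

/-- The pairs of words of lengths `s` and `t` with distinct ends. -/
def distinctEndsPairs (A : Type*) (s t : ℕ) : Set (List A × List A) :=
  {x | x.1.length = s ∧ x.2.length = t ∧ DistinctEnds x.1 x.2}

theorem ncard_tuplesOfLengths_inter_distinctEnds (lam : κ × Bool → ℕ) :
    (tuplesOfLengths A lam ∩ {f | ∀ i, DistinctEnds (f (i, false)) (f (i, true))}).ncard =
      ∏ i, (distinctEndsPairs A (lam (i, false)) (lam (i, true))).ncard := by
  let pairs : (κ × Bool → List A) ≃ (κ → List A × List A) :=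
    (Equiv.curry κ Bool (List A)).trans (Equiv.piCongrRight fun _ => Equiv.boolArrowEquivProd _)
  have hpi : Nat.card (Set.univ.pi fun i => distinctEndsPairs A (lam (i, false)) (lam (i, true))) =
      ∏ i, (distinctEndsPairs A (lam (i, false)) (lam (i, true))).ncard := by
    rw [Nat.card_congr (Equiv.Set.univPi _), Nat.card_pi]
    rfl
  rw [← hpi, ← Nat.card_coe_set_eq]
  refine Nat.card_congr (pairs.subtypeEquiv fun f => ?_)
  simp [pairs, tuplesOfLengths, distinctEndsPairs, forall_and, and_assoc]

theorem exists_eq_cons_append_singleton {α : Type*} {u : List α} {s : ℕ} (h : u.length = s + 2) :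
    ∃ a m c, u = a :: (m ++ [c]) ∧ m.length = s := by
  obtain ⟨a, u, rfl⟩ := List.exists_of_length_succ u h
  obtain ⟨m, c, rfl⟩ := List.eq_nil_or_concat u |>.resolve_left (by rintro rfl; simp at h)
  exact ⟨a, m, c, by simp, by simpa using h⟩

theorem distinctEnds_cons_append_singleton {α : Type*} {a b c d : α} {u v : List α} :
    DistinctEnds (a :: (u ++ [c])) (b :: (v ++ [d])) ↔ a ≠ b ∧ c ≠ d := by
  have hlast (x y : α) (w : List α) : (x :: (w ++ [y])).getLast? = some y := by
    rw [← List.cons_append, List.getLast?_concat]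
  simp [DistinctEnds, hlast]

variable [Fintype A]

theorem ncard_offDiag_univ :
    (Set.univ : Set A).offDiag.ncard = Fintype.card A * (Fintype.card A - 1) := by
  classical
  rw [← coe_univ, ← coe_offDiag, Set.ncard_coe_finset, offDiag_card, card_univ, Nat.mul_sub_one]

theorem ncard_distinctEndsPairs (s t : ℕ) : (distinctEndsPairs A (s + 2) (t + 2)).ncard =
    (Fintype.card A * (Fintype.card A - 1)) ^ 2 * Fintype.card A ^ (s + t) := by
  let assemble (x : (A × A) × (A × A) × List A × List A) : List A × List A :=
    (x.1.1 :: (x.2.2.1 ++ [x.2.1.1]), x.1.2 :: (x.2.2.2 ++ [x.2.1.2]))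
  have hinj : Function.Injective assemble := by
    rintro ⟨⟨a, b⟩, ⟨c, d⟩, u, v⟩ ⟨⟨a', b'⟩, ⟨c', d'⟩, u', v'⟩ h
    simp only [assemble, Prod.mk.injEq, List.cons.injEq] at h
    obtain ⟨⟨rfl, hu⟩, rfl, hv⟩ := h
    obtain ⟨rfl, hc⟩ := List.append_inj' hu rfl
    obtain ⟨rfl, hd⟩ := List.append_inj' hv rfl
    rw [List.singleton_inj.1 hc, List.singleton_inj.1 hd]
  have himage : distinctEndsPairs A (s + 2) (t + 2) = assemble '' (Set.univ.offDiag ×ˢ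
      Set.univ.offDiag ×ˢ {u | u.length = s} ×ˢ {v | v.length = t}) := by
    ext ⟨u, v⟩
    constructor
    · rintro ⟨hu, hv, hends⟩
      obtain ⟨a, u, c, rfl, hm⟩ := exists_eq_cons_append_singleton hu
      obtain ⟨b, v, d, rfl, hm'⟩ := exists_eq_cons_append_singleton hv
      obtain ⟨hab, hcd⟩ := distinctEnds_cons_append_singleton.1 hends
      exact ⟨((a, b), (c, d), u, v), by simpa using ⟨hab, hcd, hm, hm'⟩, rfl⟩
    · rintro ⟨⟨⟨a, b⟩, ⟨c, d⟩, u, v⟩, h, ⟨⟩⟩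
      obtain ⟨hab, hcd, hu, hv⟩ : a ≠ b ∧ c ≠ d ∧ u.length = s ∧ v.length = t := by simpa using h
      exact ⟨by simp [hu], by simp [hv], distinctEnds_cons_append_singleton.2 ⟨hab, hcd⟩⟩
  rw [himage, Set.ncard_image_of_injective _ hinj, Set.ncard_prod, Set.ncard_prod, Set.ncard_prod,
    ncard_offDiag_univ, ncard_setOf_length_eq, ncard_setOf_length_eq]
  ring

theorem ncard_distinctEndsPairs_eq_mul {s t : ℕ} (hs : 2 ≤ s) (ht : 2 ≤ t) :
    ((distinctEndsPairs A s t).ncard : ℝ) =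
      (Fintype.card A : ℝ) ^ (s + t) * ((Fintype.card A - 1) / Fintype.card A) ^ 2 := by
  obtain ⟨s, rfl⟩ := Nat.exists_eq_add_of_le' hs
  obtain ⟨t, rfl⟩ := Nat.exists_eq_add_of_le' ht
  rw [ncard_distinctEndsPairs]
  rcases isEmpty_or_nonempty A with hA | hA
  · simp
  have hpos : 1 ≤ Fintype.card A := Fintype.card_pos
  push_cast [Nat.cast_sub hpos]
  have : (Fintype.card A : ℝ) ≠ 0 := by positivity
  field_simp
  ring

theorem proportion_tuplesOfLengths_distinctEnds [Nonempty A] {lam : κ × Bool → ℕ}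
    (hlam : ∀ i, 2 ≤ lam i) :
    proportion (tuplesOfLengths A lam) {f | ∀ i, DistinctEnds (f (i, false)) (f (i, true))} =
      ((Fintype.card A - 1) / Fintype.card A : ℝ) ^ (2 * Fintype.card κ) := by
  have hsum : ∑ i, (lam (i, false) + lam (i, true)) = ∑ x, lam x := by
    simp [Fintype.sum_prod_type, add_comm]
  rw [proportion, ncard_tuplesOfLengths_inter_distinctEnds, ncard_tuplesOfLengths, Nat.cast_prod,
    prod_congr rfl fun i _ => ncard_distinctEndsPairs_eq_mul (hlam (i, false)) (hlam (i, true)),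
    prod_mul_distrib, prod_pow_eq_pow_sum, hsum, prod_const, card_univ, ← pow_mul, Nat.cast_pow,
    mul_div_cancel_left₀ _ (by positivity)]

theorem abs_proportion_tuplesOfLengths_distinctEnds_sub_le [Nonempty A] (lam : κ × Bool → ℕ) :
    |proportion (tuplesOfLengths A lam) {f | ∀ i, DistinctEnds (f (i, false)) (f (i, true))} -
        ((Fintype.card A - 1) / Fintype.card A : ℝ) ^ (2 * Fintype.card κ)| ≤
      proportion (tuplesOfLengths A lam) {f | ∃ i, (f i).length < 2} := by
  by_cases hlam : ∀ i, 2 ≤ lam i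
  · rw [proportion_tuplesOfLengths_distinctEnds hlam, sub_self, abs_zero]
    exact proportion_nonneg
  obtain ⟨i, hi⟩ : ∃ i, lam i < 2 := by simpa only [not_forall, not_le] using hlam
  have hone : proportion (tuplesOfLengths A lam) {f | ∃ i, (f i).length < 2} = 1 := by
    rw [← proportion_univ (finite_tuplesOfLengths (A := A) lam) (nonempty_tuplesOfLengths lam)]
    refine proportion_congr ?_
    rw [Set.inter_univ, Set.inter_eq_left]
    exact fun f hf => ⟨i, (hf i).trans_lt hi⟩
  have hcard : (1 : ℝ) ≤ Fintype.card A := by exact_mod_cast Fintype.card_pos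
  have hbase : ((Fintype.card A - 1) / Fintype.card A : ℝ) ≤ 1 :=
    div_le_one_of_le₀ (by linarith) (by positivity)
  have hbase' : 0 ≤ ((Fintype.card A - 1) / Fintype.card A : ℝ) :=
    div_nonneg (by linarith) (by positivity)
  rw [hone]
  exact abs_sub_le_of_nonneg_of_le proportion_nonneg
    (proportion_le_one (finite_tuplesOfLengths lam)) (pow_nonneg hbase' _)
    (pow_le_one₀ hbase' hbase)

end DistinctEnds

section Limit

open Filter
open scoped Topology

/-- The length above which a factor is not expected to repeat in words of total length `n`. It is
logarithmic in `n`, and large enough for `(n + 1) ^ 3 ≤ |A| ^ repeatLength n`. -/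
def repeatLength (n : ℕ) : ℕ := 3 * (Nat.log 2 n + 1)

theorem repeatLength_pos (n : ℕ) : 0 < repeatLength n := Nat.mul_pos three_pos (Nat.succ_pos _)

theorem succ_pow_three_le_pow_repeatLength {a : ℕ} (ha : 2 ≤ a) (n : ℕ) :
    (n + 1) ^ 3 ≤ a ^ repeatLength n :=
  calc (n + 1) ^ 3 ≤ (2 ^ (Nat.log 2 n + 1)) ^ 3 :=
        Nat.pow_le_pow_left (Nat.lt_pow_succ_log_self one_lt_two n) 3
    _ = 2 ^ repeatLength n := by rw [← pow_mul, mul_comm, repeatLength]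
    _ ≤ a ^ repeatLength n := Nat.pow_le_pow_left ha _

theorem tendsto_repeatLength_div_atTop :
    Tendsto (fun n : ℕ => (repeatLength n : ℝ) / n) atTop (𝓝 0) := by
  have hlog : Tendsto (fun n : ℕ => Real.log n / n) atTop (𝓝 0) :=
    Real.isLittleO_log_id_atTop.tendsto_div_nhds_zero.comp tendsto_natCast_atTop_atTop
  have hbound (n : ℕ) :
      (repeatLength n : ℝ) / n ≤ 3 / Real.log 2 * (Real.log n / n) + 3 * (1 / n) := by
    have : (Nat.log 2 n : ℝ) ≤ Real.log n / Real.log 2 := Real.natLog_le_logb n 2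
    calc (repeatLength n : ℝ) / n = 3 * (Nat.log 2 n + 1) / n := by simp [repeatLength]
      _ ≤ 3 * (Real.log n / Real.log 2 + 1) / n := by gcongr
      _ = _ := by ring
  exact squeeze_zero (fun n => by positivity) hbound
    (by simpa using (hlog.const_mul _).add (tendsto_one_div_atTop_nhds_zero_nat.const_mul 3))

variable {κ A : Type*}

/-- The tuples for which the relation words are too short or have too long repeated factors for the
presentation to satisfy the metric small overlap condition at `repeatLength n`. -/
def exceptionalTuples (κ A : Type*) (n : ℕ) : Set (κ × Bool → List A) :=
  {f | ∃ i, (f i).length < 3 * repeatLength n} ∪ {f | ¬ RepeatFree (repeatLength n) f}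

theorem repeatFree_of_notMem_exceptionalTuples {n : ℕ} {f : κ × Bool → List A}
    (hf : f ∉ exceptionalTuples κ A n) :
    RepeatFree (repeatLength n) f ∧ ∀ i, 3 * repeatLength n ≤ (f i).length := by
  simpa [exceptionalTuples, and_comm] using hf

theorem injective_relationsOf_of_notMem_exceptionalTuples {n : ℕ} {f : κ × Bool → List A}
    (hf : f ∉ exceptionalTuples κ A n) : Function.Injective (relationsOf f) :=
  have ⟨hrep, hlen⟩ := repeatFree_of_notMem_exceptionalTuples hf
  hrep.injective_relationsOf fun i => by have := hlen i; omega

theorem presentsCancellative_iff_of_notMem_exceptionalTuples {n : ℕ} {f : κ × Bool → List A}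
    (hf : f ∉ exceptionalTuples κ A n) : PresentsCancellative (Set.range (relationsOf f)) ↔
      ∀ i, DistinctEnds (f (i, false)) (f (i, true)) :=
  have ⟨hrep, hlen⟩ := repeatFree_of_notMem_exceptionalTuples hf
  hrep.presentsCancellative_iff (repeatLength_pos n) hlen

variable {ι : Type*} [Fintype ι]

theorem tendsto_proportion_exists_length_lt [Finite A] [Nontrivial ι] {L : ℕ → ℕ}
    (hL : Tendsto (fun n => (L n : ℝ) / n) atTop (𝓝 0)) :
    Tendsto (fun n => proportion (tuplesOfTotalLength ι A n)
      {f | ∃ i, (f i).length < L n}) atTop (𝓝 0) := by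
  have hlim := hL.const_mul ((Fintype.card ι : ℝ) ^ 2)
  rw [mul_zero] at hlim
  refine squeeze_zero' (.of_forall fun n => proportion_nonneg) ?_ hlim
  filter_upwards [eventually_gt_atTop 0] with n hn
  exact (proportion_exists_length_lt_le hn (L n)).trans_eq (mul_div_assoc _ _ _)

theorem tendsto_proportion_not_repeatFree [Finite A] [Nontrivial A] :
    Tendsto (fun n => proportion (tuplesOfTotalLength ι A n)
      {f | ¬ RepeatFree (repeatLength n) f}) atTop (𝓝 0) := by
  cases nonempty_fintype A
  have hbound (n : ℕ) : proportion (tuplesOfTotalLength ι A n)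
      {f | ¬ RepeatFree (repeatLength n) f} ≤ (Fintype.card ι : ℝ) ^ 2 * (1 / (n + 1)) := by
    have hpow : ((n : ℝ) + 1) ^ 3 ≤ (Fintype.card A : ℝ) ^ repeatLength n := by
      exact_mod_cast succ_pow_three_le_pow_repeatLength Fintype.one_lt_card n
    calc _ ≤ (Fintype.card ι * (n + 1) : ℝ) ^ 2 / Fintype.card A ^ repeatLength n :=
          proportion_not_repeatFree_le n
      _ ≤ (Fintype.card ι * (n + 1) : ℝ) ^ 2 / (n + 1) ^ 3 := by gcongr
      _ = _ := by field_simp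
  have hlim := tendsto_one_div_add_atTop_nhds_zero_nat.const_mul ((Fintype.card ι : ℝ) ^ 2)
  rw [mul_zero] at hlim
  exact squeeze_zero (fun n => proportion_nonneg) hbound hlim

variable [Fintype κ] [Nonempty κ]

theorem tendsto_proportion_exceptionalTuples [Finite A] [Nontrivial A] :
    Tendsto (fun n => proportion (tuplesOfTotalLength (κ × Bool) A n) (exceptionalTuples κ A n))
      atTop (𝓝 0) := by
  have hlen : Tendsto (fun n => ((3 * repeatLength n : ℕ) : ℝ) / n) atTop (𝓝 0) := by
    simpa [mul_div_assoc] using tendsto_repeatLength_div_atTop.const_mul 3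
  refine squeeze_zero (fun n => proportion_nonneg) (fun n => proportion_union_le) ?_
  simpa using (tendsto_proportion_exists_length_lt (ι := κ × Bool) (A := A) hlen).add
    tendsto_proportion_not_repeatFree

theorem tendsto_proportion_distinctEnds [Fintype A] [Nonempty A] :
    Tendsto (fun n => proportion (tuplesOfTotalLength (κ × Bool) A n)
        {f | ∀ i, DistinctEnds (f (i, false)) (f (i, true))}) atTop
      (𝓝 (((Fintype.card A - 1) / Fintype.card A : ℝ) ^ (2 * Fintype.card κ))) := by
  have hshort := tendsto_proportion_exists_length_lt (ι := κ × Bool) (A := A) (L := fun _ => 2)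
    (tendsto_const_div_atTop_nhds_zero_nat _)
  refine tendsto_iff_norm_sub_tendsto_zero.2 (squeeze_zero (fun n => norm_nonneg _) (fun n => ?_)
    hshort)
  exact abs_proportion_tuplesOfTotalLength_sub_le abs_proportion_tuplesOfLengths_distinctEnds_sub_le

theorem tendsto_proportion_injective [Finite A] [Nontrivial A] :
    Tendsto (fun n => proportion (tuplesOfTotalLength (κ × Bool) A n)
      {f | Function.Injective (relationsOf f)}) atTop (𝓝 1) := by
  refine tendsto_proportion_of_agree (C := fun _ => Set.univ) finite_tuplesOfTotalLength
    (fun n f _ hf => ?_) tendsto_proportion_exceptionalTuples ?_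
  · simpa using injective_relationsOf_of_notMem_exceptionalTuples hf
  · simp only [proportion_univ (finite_tuplesOfTotalLength _) (nonempty_tuplesOfTotalLength _),
      tendsto_const_nhds]

theorem tendsto_proportion_injective_and_presentsCancellative [Fintype A] [Nontrivial A] :
    Tendsto (fun n => proportion (tuplesOfTotalLength (κ × Bool) A n)
        {f | Function.Injective (relationsOf f) ∧ PresentsCancellative (Set.range (relationsOf f))})
      atTop (𝓝 (((Fintype.card A - 1) / Fintype.card A : ℝ) ^ (2 * Fintype.card κ))) :=
  tendsto_proportion_of_agree finite_tuplesOfTotalLength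
    (fun _ _ _ hf => (and_iff_right (injective_relationsOf_of_notMem_exceptionalTuples hf)).trans
      (presentsCancellative_iff_of_notMem_exceptionalTuples hf))
    tendsto_proportion_exceptionalTuples tendsto_proportion_distinctEnds

theorem presCount_div_presCount [Finite A] [Nonempty A] (n : ℕ)
    (P : Set (FreeMonoid A × FreeMonoid A) → Prop) :
    (presCount (Fintype.card κ) n P : ℝ) /
        presCount (Fintype.card κ) n (fun _ : Set (FreeMonoid A × FreeMonoid A) => True) =
      proportion (tuplesOfTotalLength (κ × Bool) A n)
          {f | Function.Injective (relationsOf f) ∧ P (Set.range (relationsOf f))} /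
        proportion (tuplesOfTotalLength (κ × Bool) A n)
          {f | Function.Injective (relationsOf f)} := by
  have htotal := presCount_mul_factorial (κ := κ) (A := A) n fun _ => True
  simp only [and_true] at htotal
  have hne : ((tuplesOfTotalLength (κ × Bool) A n).ncard : ℝ) ≠ 0 := by
    exact_mod_cast ((Set.ncard_pos (finite_tuplesOfTotalLength n)).2
      (nonempty_tuplesOfTotalLength n)).ne'
  have hfac : ((Fintype.card κ).factorial : ℝ) ≠ 0 := by positivity
  rw [proportion, proportion, div_div_div_cancel_right₀ hne, ← htotal, ← presCount_mul_factorial]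
  push_cast
  rw [mul_div_mul_right _ _ hfac]

theorem tendsto_presCount_presentsCancellative_div [Fintype A] [Nontrivial A] :
    Tendsto (fun n => (presCount (Fintype.card κ) n (PresentsCancellative (A := A)) : ℝ) /
        presCount (Fintype.card κ) n fun _ : Set (FreeMonoid A × FreeMonoid A) => True) atTop
      (𝓝 (((Fintype.card A - 1) / Fintype.card A : ℝ) ^ (2 * Fintype.card κ))) := by
  simp only [presCount_div_presCount]
  have hdiv := tendsto_proportion_injective_and_presentsCancellative (κ := κ) (A := A).div
    (tendsto_proportion_injective (κ := κ) (A := A)) one_ne_zero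
  rwa [div_one] at hdiv

end Limit

/-- **Theorem.** For a finite alphabet `A` with `|A| ≥ 2` and a positive integer `k`,
the proportion of `A`-generated `k`-relation presentations of sum relation length `n`
presenting a cancellative monoid tends to `((|A|-1)/|A|)^(2k)` as `n → ∞`. -/
theorem statement17 {A : Type*} [Fintype A] (hA : 2 ≤ Fintype.card A)
    (k : ℕ) (hk : 1 ≤ k) :
    Filter.Tendsto (fun n : ℕ =>
        (presCount (A := A) k n (fun R =>
          (∀ x y z : (presCon R).Quotient, x * y = x * z → y = z) ∧
          (∀ x y z : (presCon R).Quotient, y * x = z * x → y = z)) : ℝ) /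
        (presCount (A := A) k n (fun _ => True) : ℝ))
      Filter.atTop
      (nhds (((Fintype.card A - 1 : ℝ) / (Fintype.card A : ℝ)) ^ (2 * k))) := by
  have : Nontrivial A := Fintype.one_lt_card_iff_nontrivial.1 hA
  have : NeZero k := ⟨by omega⟩
  have hlim := tendsto_presCount_presentsCancellative_div (κ := Fin k) (A := A)
  rwa [Fintype.card_fin] at hlim
end
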